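/- arXiv:2009.00052 — 6 statements merged into one kernel-verified Lean document; each statement's English description precedes it below -/
import Mathlib

section
/- As the integer n → ∞, e^{−α n} ∫_0^n φ(s) e^{α s} A_s ds converges to λ_φ · A_∞, where λ_φ := (∫_0^1 φ(s) e^{α s} ds)/(e^α − 1). -/
open MeasureTheory Filter

lemma aux_rec (g : ℝ → ℝ) (r : ℝ) (hg : ∀ a b, IntervalIntegrable g volume a b)
    (h : ∀ s, g (s + 1) = r * g s) (t : ℝ) :
    ∫ s in (0:ℝ)..(t + 1), g s = (∫ s in (0:ℝ)..1, g s) + r * ∫ s in (0:ℝ)..t, g s := by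
  rw [← intervalIntegral.integral_add_adjacent_intervals (hg 0 1) (hg 1 (t + 1))]
  congr 1
  rw [← intervalIntegral.integral_const_mul]
  have := intervalIntegral.integral_comp_add_right (a := 0) (b := t) g 1
  rw [zero_add] at this
  rw [← this]
  simp only [h]

lemma aux_int (f : ℝ → ℝ) (hm : Measurable f) (hb : ∃ M : ℝ, ∀ t : ℝ, |f t| ≤ M) (a b : ℝ) :
    IntervalIntegrable f volume a b := by
  obtain ⟨M, hM⟩ := hb
  refine (intervalIntegrable_const (c := M)).mono_fun hm.aestronglyMeasurable ?_
  refine Eventually.of_forall fun t => ?_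
  simp only [Real.norm_eq_abs]
  exact (hM t).trans (le_abs_self M)

/-- As the integer `n → ∞`, `e^{-α n} ∫_0^n φ(s) e^{α s} A_s ds` converges to
`λ_φ · A_∞`, where `λ_φ := (∫_0^1 φ(s) e^{α s} ds) / (e^α - 1)`. -/
theorem stmt_5 (α : ℝ) (hα : 0 < α) (L : ℝ → ℝ)
    (hLmeas : Measurable L) (hLbdd : ∃ M : ℝ, ∀ t : ℝ, |L t| ≤ M)
    (hLper : ∀ t : ℝ, L (t + 1) = L t)
    (A : ℝ → ℝ) (hA : ∀ t : ℝ, A t = ∫ s in (0:ℝ)..t, Real.exp (-α * s) * L s)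
    (Ainf : ℝ) (hAinf : Ainf = A 1 / (1 - Real.exp (-α)))
    (φ : ℝ → ℝ)
    (hφmeas : Measurable φ) (hφbdd : ∃ M : ℝ, ∀ t : ℝ, |φ t| ≤ M)
    (hφper : ∀ t : ℝ, φ (t + 1) = φ t)
    (lφ : ℝ) (hlφ : lφ = (∫ s in (0:ℝ)..1, φ s * Real.exp (α * s)) / (Real.exp α - 1)) :
    Tendsto (fun n : ℕ =>
        Real.exp (-α * n) * ∫ s in (0:ℝ)..(n:ℝ), φ s * Real.exp (α * s) * A s)
      atTop (nhds (lφ * Ainf)) := by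
  have hE : 1 < Real.exp α := Real.one_lt_exp_iff.2 hα
  have hE' : Real.exp (-α) < 1 := Real.exp_lt_one_iff.2 (by linarith)
  have hl : ∀ a b, IntervalIntegrable (fun s => Real.exp (-α * s) * L s) volume a b := fun a b =>
    (aux_int L hLmeas hLbdd a b).continuousOn_mul (by fun_prop)
  have hg : ∀ a b, IntervalIntegrable (fun s => φ s * Real.exp (α * s)) volume a b := fun a b =>
    (aux_int φ hφmeas hφbdd a b).mul_continuousOn (by fun_prop)
  have hAc : Continuous A := by
    have : A = fun t => ∫ s in (0:ℝ)..t, Real.exp (-α * s) * L s := funext hA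
    rw [this]
    exact intervalIntegral.continuous_primitive hl 0
  have hAr : ∀ t, A (t + 1) = A 1 + Real.exp (-α) * A t := fun t => by
    rw [hA, hA 1, hA t]
    refine aux_rec _ _ hl (fun s => ?_) t
    rw [hLper, mul_add, Real.exp_add, mul_one]; ring
  have hgr : ∀ s, φ (s + 1) * Real.exp (α * (s + 1)) = Real.exp α * (φ s * Real.exp (α * s)) :=
    fun s => by rw [hφper, mul_add, Real.exp_add, mul_one]; ring
  have hAi : Ainf = A 1 + Real.exp (-α) * Ainf := by
    have : 1 - Real.exp (-α) ≠ 0 := by linarith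
    rw [hAinf]; field_simp; ring
  have hee : Real.exp α * Real.exp (-α) = 1 := by rw [← Real.exp_add]; simp
  have hB : ∀ a b, IntervalIntegrable (fun s => φ s * Real.exp (α * s) * (A s - Ainf)) volume a b :=
    fun a b => (hg a b).mul_continuousOn (by fun_prop)
  have hG : ∀ n : ℕ, ∫ s in (0:ℝ)..(n:ℝ), φ s * Real.exp (α * s)
      = lφ * (Real.exp (α * n) - 1) := by
    have h0 : Real.exp α - 1 ≠ 0 := by linarith
    have h1 : ∫ s in (0:ℝ)..1, φ s * Real.exp (α * s) = lφ * (Real.exp α - 1) := by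
      rw [hlφ]; field_simp
    intro n
    induction n with
    | zero => simp
    | succ k ih =>
      push_cast
      rw [aux_rec _ _ hg hgr, ih, h1, mul_add, Real.exp_add, mul_one]; ring
  set C := ∫ s in (0:ℝ)..1, φ s * Real.exp (α * s) * (A s - Ainf) with hC
  have hH : ∀ n : ℕ, ∫ s in (0:ℝ)..(n:ℝ), φ s * Real.exp (α * s) * (A s - Ainf) = n * C := by
    intro n
    induction n with
    | zero => simp
    | succ k ih =>
      push_cast
      rw [aux_rec _ 1 hB, ih, ← hC]
      · ring
      · intro s
        rw [hgr, hAr]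
        have : A 1 + Real.exp (-α) * A s - Ainf = Real.exp (-α) * (A s - Ainf) := by
          linear_combination -hAi
        rw [this]
        linear_combination (φ s * Real.exp (α * s) * (A s - Ainf)) * hee
  have hI : ∀ n : ℕ, Real.exp (-α * n) * ∫ s in (0:ℝ)..(n:ℝ), φ s * Real.exp (α * s) * A s
      = lφ * Ainf * (1 - Real.exp (-α * n)) + C * (n * Real.exp (-α * n)) := by
    intro n
    have h1 : ∫ s in (0:ℝ)..(n:ℝ), φ s * Real.exp (α * s) * A s
        = n * C + lφ * (Real.exp (α * n) - 1) * Ainf := by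
      rw [← hH, ← hG, ← intervalIntegral.integral_mul_const,
        ← intervalIntegral.integral_add (hB _ _) ((hg _ _).mul_const _)]
      congr 1; ext s; ring
    have h2 : Real.exp (-α * n) * Real.exp (α * n) = 1 := by rw [← Real.exp_add]; simp
    rw [h1]
    linear_combination lφ * Ainf * h2
  simp only [hI]
  have t0 : Tendsto (fun n : ℕ => Real.exp (-α * n)) atTop (nhds 0) := by
    refine Real.tendsto_exp_atBot.comp ?_
    exact tendsto_natCast_atTop_atTop.const_mul_atTop_of_neg (by linarith)
  have t1 : Tendsto (fun n : ℕ => (n:ℝ) * Real.exp (-α * n)) atTop (nhds 0) := by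
    have := (tendsto_self_mul_const_pow_of_lt_one (Real.exp_pos (-α)).le hE')
    refine this.congr fun n => ?_
    rw [← Real.exp_nat_mul, mul_comm (n:ℝ) (-α)]
  have := ((t0.const_sub 1).const_mul (lφ * Ainf)).add (t1.const_mul C)
  simpa using this
end

section
/- Almost surely the function s ↦ e^{−α s} B_s(ω) is integrable on [0, ∞), and Z_t converges to Z_∞ := ∫_0^∞ e^{−α s} B_s ds as t → ∞ both almost surely and in L²(Ω), i.e. E[(Z_t − Z_∞)²] → 0. -/
open MeasureTheory ProbabilityTheory Filter

lemma aux_det (α : ℝ) (hα : 0 < α) (b : ℝ → ℝ) (hb : Measurable b)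
    (hF : IntegrableOn (fun s => Real.exp (-α * s) * b s ^ 2) (Set.Ioi (0:ℝ))) :
    IntegrableOn (fun s => Real.exp (-α * s) * b s) (Set.Ioi (0:ℝ)) ∧
    ∀ t : ℝ, 0 ≤ t → ((∫ s in (0:ℝ)..t, Real.exp (-α * s) * b s)
      - ∫ s in Set.Ioi (0:ℝ), Real.exp (-α * s) * b s) ^ 2 ≤
      Real.exp (-α * t) / α * ∫ s in Set.Ioi (0:ℝ), Real.exp (-α * s) * b s ^ 2 := by
  have hE : IntegrableOn (fun s => Real.exp (-α * s)) (Set.Ioi (0:ℝ)) :=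
    integrableOn_exp_mul_Ioi (by linarith) 0
  have hI : IntegrableOn (fun s => Real.exp (-α * s) * b s) (Set.Ioi (0:ℝ)) := by
    refine Integrable.mono' (hE.add hF) (by fun_prop) (Eventually.of_forall fun s => ?_)
    have h1 := Real.exp_pos (-α * s)
    simp only [Pi.add_apply, Real.norm_eq_abs, abs_mul, abs_of_pos h1]
    nlinarith [sq_nonneg (|b s| - 1), sq_abs (b s), mul_nonneg h1.le (sq_nonneg (|b s| - 1)), abs_nonneg (b s), mul_nonneg h1.le (sq_nonneg (|b s|))]
  refine ⟨hI, fun t ht => ?_⟩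
  have hsub : Set.Ioi t ⊆ Set.Ioi (0:ℝ) := Set.Ioi_subset_Ioi ht
  have h1 := intervalIntegral.integral_interval_add_Ioi hI (hI.mono_set hsub)
  have hA : ∫ s in Set.Ioi t, Real.exp (-α * s) = Real.exp (-α * t) / α := by
    rw [integral_exp_mul_Ioi (by linarith) t]
    rw [neg_div, div_neg, neg_neg]
  set A := Real.exp (-α * t) / α with hAdef
  have hApos : 0 < A := by positivity
  set I := ∫ s in Set.Ioi t, Real.exp (-α * s) * b s with hIdef
  have hFt : ∫ s in Set.Ioi t, Real.exp (-α * s) * b s ^ 2 ≤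
      ∫ s in Set.Ioi (0:ℝ), Real.exp (-α * s) * b s ^ 2 :=
    setIntegral_mono_set hF (Eventually.of_forall fun s => by simp only [Pi.zero_apply]; positivity) hsub.eventuallyLE
  have key : 0 ≤ ∫ s in Set.Ioi t, Real.exp (-α * s) * (b s - I / A) ^ 2 :=
    integral_nonneg fun s => by simp only [Pi.zero_apply]; positivity
  have hexp : ∫ s in Set.Ioi t, Real.exp (-α * s) * (b s - I / A) ^ 2 =
      (∫ s in Set.Ioi t, Real.exp (-α * s) * b s ^ 2) - 2 * (I / A) * I + (I / A) ^ 2 * A := by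
    have : ∀ s, Real.exp (-α * s) * (b s - I / A) ^ 2 = (Real.exp (-α * s) * b s ^ 2
      - 2 * (I / A) * (Real.exp (-α * s) * b s)) + (I / A) ^ 2 * Real.exp (-α * s) := by
      intro s; ring
    simp_rw [this]
    rw [integral_add, integral_sub, integral_const_mul, integral_const_mul, hA]
    · exact hF.mono_set hsub
    · exact (hI.mono_set hsub).const_mul _
    · exact (hF.mono_set hsub).sub ((hI.mono_set hsub).const_mul _)
    · exact (hE.mono_set hsub).const_mul _
  have h2 : I ^ 2 ≤ A * ∫ s in Set.Ioi t, Real.exp (-α * s) * b s ^ 2 := by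
    rw [hexp] at key
    have := mul_nonneg hApos.le key
    have h3 : A * ((∫ s in Set.Ioi t, Real.exp (-α * s) * b s ^ 2) - 2 * (I / A) * I + (I / A) ^ 2 * A)
      = A * (∫ s in Set.Ioi t, Real.exp (-α * s) * b s ^ 2) - I ^ 2 := by
      field_simp; ring
    linarith
  have h4 : (∫ s in (0:ℝ)..t, Real.exp (-α * s) * b s)
      - ∫ s in Set.Ioi (0:ℝ), Real.exp (-α * s) * b s = - I := by linarith
  rw [h4, neg_sq]
  exact h2.trans (mul_le_mul_of_nonneg_left hFt hApos.le)

theorem stmt_10 {Ω : Type*} [MeasurableSpace Ω] (P : Measure Ω) [IsProbabilityMeasure P]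
    (H : ℝ) (hH1 : 1 / 2 ≤ H) (hH2 : H < 1)
    (B : ℝ → Ω → ℝ)
    (hBmeas : ∀ t : ℝ, Measurable (B t))
    (hBgauss : ∀ (m : ℕ) (t : Fin m → ℝ) (c : Fin m → ℝ), (∀ i, 0 ≤ t i) →
      ∃ v : NNReal, Measure.map (fun ω => ∑ i, c i * B (t i) ω) P = gaussianReal 0 v)
    (hB0 : ∀ ω, B 0 ω = 0)
    (hBcov : ∀ s t : ℝ, 0 ≤ s → 0 ≤ t →
      ∫ ω, B s ω * B t ω ∂P = 1 / 2 * (s ^ (2 * H) + t ^ (2 * H) - |t - s| ^ (2 * H)))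
    (hBcont : ∀ᵐ ω ∂P, ContinuousOn (fun t => B t ω) (Set.Ici (0 : ℝ)))
    (α : ℝ) (hα : 0 < α)
    (Z : ℝ → Ω → ℝ)
    (hZ : ∀ (t : ℝ) (ω : Ω), Z t ω = ∫ s in (0:ℝ)..t, Real.exp (-α * s) * B s ω)
    (Zinf : Ω → ℝ)
    (hZinf : ∀ ω : Ω, Zinf ω = ∫ s in Set.Ioi (0:ℝ), Real.exp (-α * s) * B s ω) :
    (∀ᵐ ω ∂P, IntegrableOn (fun s : ℝ => Real.exp (-α * s) * B s ω) (Set.Ici (0:ℝ))) ∧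
    (∀ᵐ ω ∂P, Tendsto (fun t : ℝ => Z t ω) atTop (nhds (Zinf ω))) ∧
    Tendsto (fun t : ℝ => ∫ ω, (Z t ω - Zinf ω) ^ 2 ∂P) atTop (nhds 0) := by
  obtain ⟨G, hGsub, hGm, hGn⟩ : ∃ G : Set Ω, (∀ ω ∈ G, ContinuousOn (fun t => B t ω) (Set.Ici (0 : ℝ)))
      ∧ MeasurableSet G ∧ ∀ᵐ ω ∂P, ω ∈ G := by
    obtain ⟨N, h1, h2, h3⟩ := exists_measurable_superset_of_null (ae_iff.1 hBcont)
    refine ⟨Nᶜ, fun ω hω => ?_, h2.compl, by simpa [ae_iff] using h3⟩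
    by_contra hc
    exact hω (h1 hc)
  let X : ℝ → Ω → ℝ := fun t => G.indicator (B (max t 0))
  have hXm : ∀ t, Measurable (X t) := fun t => (hBmeas _).indicator hGm
  have hXc : ∀ ω, Continuous fun t => X t ω := by
    intro ω
    by_cases hω : ω ∈ G
    · simp only [X, Set.indicator_of_mem hω]
      exact (hGsub ω hω).comp_continuous (by fun_prop) (fun t => le_max_right t 0)
    · simp only [X, Set.indicator_of_notMem hω]
      exact continuous_const
  have hXB : ∀ ω ∈ G, ∀ s, 0 ≤ s → X s ω = B s ω := by
    intro ω hω s hs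
    simp only [X, Set.indicator_of_mem hω, max_eq_left hs]
  have hXj : Measurable (fun p : Ω × ℝ => X p.2 p.1) := by
    have := measurable_uncurry_of_continuous_of_measurable (u := X) hXc hXm
    exact this.comp measurable_swap
  have hX2 : ∀ s, 0 < s → Integrable (fun ω => X s ω ^ 2) P ∧ ∫ ω, X s ω ^ 2 ∂P = s ^ (2 * H) := by
    intro s hs
    have h0 := hBcov s s hs.le hs.le
    have h1 : ∫ ω, B s ω * B s ω ∂P = s ^ (2 * H) := by
      rw [h0, sub_self, abs_zero, Real.zero_rpow (by linarith)]; ring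
    have hae : (fun ω => B s ω * B s ω) =ᵐ[P] fun ω => X s ω ^ 2 := by
      filter_upwards [hGn] with ω hω
      rw [hXB ω hω s hs.le, sq]
    have hi : Integrable (fun ω => B s ω * B s ω) P := by
      by_contra hc
      rw [integral_undef hc] at h1
      exact (Real.rpow_pos_of_pos hs _).ne h1
    exact ⟨hi.congr hae, by rw [← integral_congr_ae hae, h1]⟩
  have hprod : Integrable (fun p : Ω × ℝ => Real.exp (-α * p.2) * X p.2 p.1 ^ 2)
      (P.prod (volume.restrict (Set.Ioi (0:ℝ)))) := by
    rw [integrable_prod_iff' (by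
      refine Measurable.aestronglyMeasurable ?_
      exact Measurable.mul (by fun_prop) (hXj.pow_const 2))]
    constructor
    · filter_upwards [ae_restrict_mem measurableSet_Ioi] with s hs
      exact (hX2 s hs).1.const_mul _
    · have hg : IntegrableOn (fun s : ℝ => s ^ (2 * H) * Real.exp (-α * s)) (Set.Ioi 0) := by
        have := integrableOn_rpow_mul_exp_neg_mul_rpow (s := 2 * H) (p := 1) (b := α) (by linarith) (by norm_num) hα
        simpa using this
      refine Integrable.congr hg ?_
      filter_upwards [ae_restrict_mem measurableSet_Ioi] with s hs
      have : ∀ ω, ‖Real.exp (-α * s) * X s ω ^ 2‖ = Real.exp (-α * s) * X s ω ^ 2 :=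
        fun ω => Real.norm_of_nonneg (by positivity)
      simp only [this]
      rw [integral_const_mul, (hX2 s hs).2, mul_comm]
  have hFae := hprod.prod_right_ae
  have hFint := hprod.integral_prod_left
  have main : ∀ᵐ ω ∂P, IntegrableOn (fun s : ℝ => Real.exp (-α * s) * B s ω) (Set.Ioi (0:ℝ)) ∧
      ∀ t, 0 ≤ t → (Z t ω - Zinf ω) ^ 2 ≤ Real.exp (-α * t) / α *
        ∫ s in Set.Ioi (0:ℝ), Real.exp (-α * s) * X s ω ^ 2 := by
    filter_upwards [hFae, hGn] with ω h1 hω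
    obtain ⟨h2, h3⟩ := aux_det α hα (fun s => X s ω) (hXc ω).measurable h1
    have e : Set.EqOn (fun s => Real.exp (-α * s) * X s ω) (fun s => Real.exp (-α * s) * B s ω) (Set.Ioi 0) := by
      intro s hs
      simp only [hXB ω hω s (le_of_lt hs)]
    refine ⟨h2.congr_fun e measurableSet_Ioi, fun t ht => ?_⟩
    have := h3 t ht
    rw [setIntegral_congr_fun measurableSet_Ioi e, intervalIntegral.integral_of_le ht,
      setIntegral_congr_fun measurableSet_Ioc (e.mono Set.Ioc_subset_Ioi_self),
      ← intervalIntegral.integral_of_le ht, ← hZ, ← hZinf] at this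
    exact this
  refine ⟨?_, ?_, ?_⟩
  · filter_upwards [main] with ω h
    rw [integrableOn_Ici_iff_integrableOn_Ioi]
    exact h.1
  · filter_upwards [main] with ω h
    simp only [hZ, hZinf]
    exact intervalIntegral_tendsto_integral_Ioi 0 h.1 tendsto_id
  · have hlim : Tendsto (fun t : ℝ => Real.exp (-α * t) / α *
        ∫ ω, (∫ s in Set.Ioi (0:ℝ), Real.exp (-α * s) * X s ω ^ 2) ∂P) atTop (nhds 0) := by
      have h1 : Tendsto (fun t : ℝ => Real.exp (-α * t)) atTop (nhds 0) :=
        Real.tendsto_exp_atBot.comp (tendsto_id.const_mul_atTop_of_neg (by linarith))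
      simpa using (h1.div_const α).mul_const
        (∫ ω, (∫ s in Set.Ioi (0:ℝ), Real.exp (-α * s) * X s ω ^ 2) ∂P)
    refine squeeze_zero' (Eventually.of_forall fun t => integral_nonneg fun ω => sq_nonneg _) ?_ hlim
    filter_upwards [eventually_ge_atTop 0] with t ht
    rw [← integral_const_mul]
    refine integral_mono_of_nonneg (Eventually.of_forall fun ω => sq_nonneg _) (hFint.const_mul _) ?_
    filter_upwards [main] with ω h
    exact h.2 t ht
end

section
/- Almost surely, as the integer n → ∞, e^{−α n} ∫_0^n φ(s) e^{α s} Z_s ds converges to λ_φ · Z_∞, where λ_φ := (∫_0^1 φ(s) e^{α s} ds)/(e^α − 1). -/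
open MeasureTheory ProbabilityTheory Filter

lemma aux_err (α : ℝ) (hα : 0 < α) (G φ : ℝ → ℝ) (hG : Measurable G) (C : ℝ)
    (hC : ∀ t, |G t| ≤ C) (hG0 : Tendsto G atTop (nhds 0)) (hφ : Measurable φ) (M : ℝ)
    (hM : ∀ t, |φ t| ≤ M) :
    Tendsto (fun n : ℕ => Real.exp (-α * n) *
        ∫ s in (0:ℝ)..(n:ℝ), φ s * Real.exp (α * s) * G s) atTop (nhds 0) := by
  have hM0 : 0 ≤ M := (abs_nonneg _).trans (hM 0)
  have hC0 : 0 ≤ C := (abs_nonneg _).trans (hC 0)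
  have key : ∀ n : ℕ, Real.exp (-α * n) *
        ∫ s in (0:ℝ)..(n:ℝ), φ s * Real.exp (α * s) * G s
      = ∫ u in Set.Ioi (0:ℝ), (Set.Iic (n:ℝ)).indicator
          (fun u => φ (n - u) * Real.exp (-α * u) * G (n - u)) u := by
    intro n
    rw [MeasureTheory.setIntegral_indicator measurableSet_Iic, Set.Ioi_inter_Iic,
      ← intervalIntegral.integral_of_le (Nat.cast_nonneg n),
      ← intervalIntegral.integral_const_mul]
    have := intervalIntegral.integral_comp_sub_left (a := (0:ℝ)) (b := (n:ℝ))
      (fun s => Real.exp (-α * n) * (φ s * Real.exp (α * s) * G s)) (n:ℝ)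
    simp only [sub_self, sub_zero] at this
    rw [← this]
    congr 1
    ext u
    have : Real.exp (-α * u) = Real.exp (-α * n) * Real.exp (α * (n - u)) := by
      rw [← Real.exp_add]; congr 1; ring
    rw [this]; ring
  simp_rw [key]
  have := tendsto_integral_of_dominated_convergence (μ := volume.restrict (Set.Ioi (0:ℝ)))
    (F := fun n : ℕ => (Set.Iic (n:ℝ)).indicator
          (fun u => φ (n - u) * Real.exp (-α * u) * G (n - u))) (f := fun _ => (0:ℝ))
    (fun u => M * C * Real.exp (-α * u)) ?_ ?_ ?_ ?_
  · simpa using this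
  · intro n
    refine (Measurable.indicator ?_ measurableSet_Iic).aestronglyMeasurable
    fun_prop
  · exact (integrableOn_exp_mul_Ioi (by linarith) 0).const_mul _
  · intro n
    refine Eventually.of_forall fun u => ?_
    refine (norm_indicator_le_norm_self _ _).trans ?_
    rw [norm_mul, norm_mul, Real.norm_eq_abs, Real.norm_eq_abs, Real.norm_eq_abs, Real.abs_exp]
    calc _ ≤ M * Real.exp (-α * u) * C := by
          gcongr
          · exact hM _
          · exact hC _
      _ = _ := by ring
  · refine Eventually.of_forall fun u => ?_
    have h1 : Tendsto (fun n : ℕ => G (n - u)) atTop (nhds 0) :=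
      hG0.comp (tendsto_atTop_add_const_right _ (-u) tendsto_natCast_atTop_atTop)
    have h2 : Tendsto (fun n : ℕ => (M * Real.exp (-α * u)) * |G (n - u)|) atTop (nhds 0) := by
      simpa using (h1.abs).const_mul (M * Real.exp (-α * u))
    refine squeeze_zero_norm (fun n => ?_) h2
    refine (norm_indicator_le_norm_self _ _).trans ?_
    rw [norm_mul, norm_mul, Real.norm_eq_abs, Real.norm_eq_abs, Real.norm_eq_abs, Real.abs_exp]
    gcongr
    exact hM _

lemma aux_ii (α : ℝ) (φ G : ℝ → ℝ) (hφ : Measurable φ) (M : ℝ)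
    (hM : ∀ t, |φ t| ≤ M) (hG : Continuous G) (a b : ℝ) :
    IntervalIntegrable (fun s => φ s * Real.exp (α * s) * G s) volume a b := by
  have h : IntervalIntegrable (fun s => Real.exp (α * s) * G s) volume a b :=
    (by fun_prop : Continuous fun s => Real.exp (α * s) * G s).intervalIntegrable _ _
  have h2 : IntervalIntegrable (fun s => φ s * (Real.exp (α * s) * G s)) volume a b := by
    rw [intervalIntegrable_iff] at h ⊢
    exact h.bdd_mul (c := M) hφ.aestronglyMeasurable (Eventually.of_forall hM)
  simpa only [mul_assoc] using h2

lemma aux_main (α : ℝ) (hα : 0 < α) (φ : ℝ → ℝ) (hφ : Measurable φ) (M : ℝ)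
    (hM : ∀ t, |φ t| ≤ M) (hper : ∀ t, φ (t + 1) = φ t) :
    Tendsto (fun n : ℕ => Real.exp (-α * n) *
        ∫ s in (0:ℝ)..(n:ℝ), φ s * Real.exp (α * s)) atTop
        (nhds ((∫ s in (0:ℝ)..1, φ s * Real.exp (α * s)) / (Real.exp α - 1))) := by
  set I := ∫ s in (0:ℝ)..1, φ s * Real.exp (α * s) with hI
  have hii : ∀ a b, IntervalIntegrable (fun s => φ s * Real.exp (α * s)) volume a b := by
    intro a b
    simpa using aux_ii α φ (fun _ => 1) hφ M hM continuous_const a b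
  have he : Real.exp α - 1 ≠ 0 := by
    have := Real.add_one_lt_exp hα.ne'
    linarith
  have hpern : ∀ (n : ℕ) t, φ (t + n) = φ t := by
    intro n
    induction n with
    | zero => simp
    | succ k ih => intro t; push_cast; rw [← add_assoc, hper, ih]
  have key : ∀ n : ℕ, ∫ s in (0:ℝ)..(n:ℝ), φ s * Real.exp (α * s)
      = I * (Real.exp (α * n) - 1) / (Real.exp α - 1) := by
    intro n
    induction n with
    | zero => simp
    | succ k ih =>
      rw [← intervalIntegral.integral_add_adjacent_intervals (hii 0 k) (hii k _), ih]
      have h1 : ∫ s in (k:ℝ)..((k+1 : ℕ):ℝ), φ s * Real.exp (α * s) = Real.exp (α * k) * I := by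
        have := intervalIntegral.integral_comp_add_right (a := (0:ℝ)) (b := 1)
          (fun s => φ s * Real.exp (α * s)) (k:ℝ)
        rw [zero_add, add_comm (1:ℝ)] at this
        push_cast
        rw [← this, hI, ← intervalIntegral.integral_const_mul]
        congr 1
        ext u
        rw [hpern, mul_add, Real.exp_add]; ring
      rw [h1]
      push_cast
      rw [mul_add, Real.exp_add, mul_one]
      field_simp
      ring
  have h0 : Tendsto (fun n : ℕ => Real.exp (-α * n)) atTop (nhds 0) := by
    refine Real.tendsto_exp_atBot.comp ?_
    exact tendsto_natCast_atTop_atTop.const_mul_atTop_of_neg (by linarith)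
  have h2 : Tendsto (fun n : ℕ => I / (Real.exp α - 1) * (1 - Real.exp (-α * n))) atTop
      (nhds (I / (Real.exp α - 1))) := by
    simpa using (h0.const_sub 1).const_mul (I / (Real.exp α - 1))
  refine h2.congr fun n => ?_
  rw [key]
  have : Real.exp (-α * n) * Real.exp (α * n) = 1 := by
    rw [← Real.exp_add]; simp
  generalize Real.exp (-α * n) = x at *
  generalize Real.exp (α * n) = y at *
  field_simp
  linear_combination (-I) * this

lemma aux_det_s12 (α : ℝ) (hα : 0 < α) (φ : ℝ → ℝ) (hφ : Measurable φ) (M : ℝ)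
    (hM : ∀ t, |φ t| ≤ M) (hper : ∀ t, φ (t + 1) = φ t) (f : ℝ → ℝ)
    (hf : IntegrableOn f (Set.Ioi 0)) :
    Tendsto (fun n : ℕ => Real.exp (-α * n) *
        ∫ s in (0:ℝ)..(n:ℝ), φ s * Real.exp (α * s) * ∫ u in (0:ℝ)..s, f u) atTop
        (nhds ((∫ s in (0:ℝ)..1, φ s * Real.exp (α * s)) / (Real.exp α - 1)
          * ∫ u in Set.Ioi (0:ℝ), f u)) := by
  set L := ∫ u in Set.Ioi (0:ℝ), f u with hL
  set F := (Set.Ioi (0:ℝ)).indicator f with hF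
  have hFi : Integrable F := (integrable_indicator_iff measurableSet_Ioi).2 hf
  set G : ℝ → ℝ := fun t => (∫ u in (0:ℝ)..t, F u) - L with hGdef
  have hGc : Continuous G :=
    (intervalIntegral.continuous_primitive (fun a b => hFi.intervalIntegrable) 0).sub
      continuous_const
  have hGz : ∀ t, 0 ≤ t → ∫ u in (0:ℝ)..t, f u = G t + L := by
    intro t ht
    simp only [hGdef, sub_add_cancel]
    rw [intervalIntegral.integral_of_le ht, intervalIntegral.integral_of_le ht]
    refine setIntegral_congr_fun measurableSet_Ioc fun u hu => ?_
    simp only [hF]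
    rw [Set.indicator_of_mem (show u ∈ Set.Ioi (0:ℝ) from hu.1)]
  have hG0 : Tendsto G atTop (nhds 0) := by
    have h1 := intervalIntegral_tendsto_integral_Ioi (0:ℝ) hFi.integrableOn tendsto_id
    have h2 : ∫ u in Set.Ioi (0:ℝ), F u = L :=
      setIntegral_congr_fun measurableSet_Ioi fun u hu => Set.indicator_of_mem hu f
    rw [h2] at h1
    simpa using h1.sub_const L
  have hGb : ∀ t, |G t| ≤ (∫ u, |F u|) + |L| := by
    intro t
    refine (abs_sub _ _).trans ?_
    gcongr
    have h := intervalIntegral.norm_integral_le_integral_norm_uIoc (f := F) (a := 0) (b := t)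
      (μ := volume)
    refine h.trans ?_
    exact setIntegral_le_integral hFi.norm (Eventually.of_forall fun _ => norm_nonneg _)
  have h1 := aux_err α hα G φ hGc.measurable _ hGb hG0 hφ M hM
  have h2 := (aux_main α hα φ hφ M hM hper).mul_const L
  have h3 := h1.add h2
  rw [zero_add] at h3
  refine h3.congr fun n => ?_
  rw [mul_assoc, ← mul_add, ← intervalIntegral.integral_mul_const,
    ← intervalIntegral.integral_add (aux_ii α φ G hφ M hM hGc 0 n)
      (aux_ii α φ (fun _ => L) hφ M hM continuous_const 0 n)]
  congr 1
  refine intervalIntegral.integral_congr fun s hs => ?_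
  rw [Set.uIcc_of_le (Nat.cast_nonneg n)] at hs
  change _ = φ s * Real.exp (α * s) * ∫ u in (0:ℝ)..s, f u
  rw [hGz s hs.1]; ring

lemma aux_int_s12 {Ω : Type*} [MeasurableSpace Ω] (P : Measure Ω) [IsProbabilityMeasure P]
    (H : ℝ) (hH1 : 1 / 2 ≤ H)
    (B : ℝ → Ω → ℝ)
    (hBmeas : ∀ t : ℝ, Measurable (B t))
    (hBcov : ∀ s t : ℝ, 0 ≤ s → 0 ≤ t →
      ∫ ω, B s ω * B t ω ∂P = 1 / 2 * (s ^ (2 * H) + t ^ (2 * H) - |t - s| ^ (2 * H)))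
    (hBcont : ∀ᵐ ω ∂P, ContinuousOn (fun t => B t ω) (Set.Ici (0 : ℝ)))
    (α : ℝ) (hα : 0 < α) :
    ∀ᵐ ω ∂P, IntegrableOn (fun s => Real.exp (-α * s) * B s ω) (Set.Ioi 0) := by
  obtain ⟨N, hNsub, hNm, hNP⟩ := exists_measurable_superset_of_null (ae_iff.1 hBcont)
  set B' : ℝ → Ω → ℝ := fun t => Nᶜ.indicator (B (max t 0)) with hB'
  have hB'm : ∀ t, Measurable (B' t) := fun t => (hBmeas _).indicator hNm.compl
  have hB'c : ∀ ω, Continuous fun t => B' t ω := by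
    intro ω
    by_cases hω : ω ∈ N
    · have : (fun t => B' t ω) = fun _ => 0 := by
        ext t; simp [hB', hω]
      rw [this]; exact continuous_const
    · have : (fun t => B' t ω) = fun t => B (max t 0) ω := by
        ext t; simp [hB', hω]
      rw [this]
      have hc : ContinuousOn (fun t => B t ω) (Set.Ici (0 : ℝ)) := by
        by_contra hc
        exact hω (hNsub hc)
      exact hc.comp_continuous (by fun_prop) (fun t => Set.mem_Ici.2 (le_max_right _ _))
  have hjm : Measurable (Function.uncurry B') :=
    measurable_uncurry_of_continuous_of_measurable hB'c hB'm
  have hae : ∀ᵐ ω ∂P, ω ∉ N := by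
    rw [ae_iff]; simpa using hNP
  have hBB : ∀ t, 0 < t → B' t =ᵐ[P] B t := by
    intro t ht
    filter_upwards [hae] with ω hω
    simp [hB', hω, max_eq_left ht.le]
  have hsq : ∀ t, 0 < t → ∫ ω, B t ω * B t ω ∂P = t ^ (2 * H) := by
    intro t ht
    rw [hBcov t t ht.le ht.le, sub_self, abs_zero, Real.zero_rpow (by linarith)]
    ring
  have hsqi : ∀ t, 0 < t → Integrable (fun ω => B t ω * B t ω) P := by
    intro t ht
    by_contra h
    have h1 := hsq t ht
    rw [integral_undef h] at h1
    exact (Real.rpow_pos_of_pos ht (2 * H)).ne h1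
  have hbd : ∀ x : ℝ, |x| ≤ 1 + x * x := by
    intro x
    rcases abs_cases x with h | h <;> nlinarith [sq_nonneg (x - 1), sq_nonneg (x + 1)]
  have hi : ∀ t, 0 < t → Integrable (B t) P := by
    intro t ht
    refine ((integrable_const (1:ℝ)).add (hsqi t ht)).mono' (hBmeas t).aestronglyMeasurable ?_
    exact Eventually.of_forall fun ω => hbd _
  have hn : ∀ t, 0 < t → ∫ ω, |B t ω| ∂P ≤ 1 + t ^ (2 * H) := by
    intro t ht
    have h1 := integral_mono (hi t ht).abs ((integrable_const (1:ℝ)).add (hsqi t ht))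
      (fun ω => hbd (B t ω))
    refine h1.trans (le_of_eq ?_)
    simp only [Pi.add_apply]
    rw [integral_add (integrable_const _) (hsqi t ht), hsq t ht]
    simp
  have hFm : Measurable (fun p : ℝ × Ω => Real.exp (-α * p.1) * B' p.1 p.2) :=
    (by fun_prop : Measurable fun p : ℝ × Ω => Real.exp (-α * p.1)).mul hjm
  have hF : Integrable (fun p : ℝ × Ω => Real.exp (-α * p.1) * B' p.1 p.2)
      ((volume.restrict (Set.Ioi (0:ℝ))).prod P) := by
    rw [integrable_prod_iff hFm.aestronglyMeasurable]
    constructor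
    · filter_upwards [ae_restrict_mem measurableSet_Ioi] with t ht
      exact ((hi t ht).congr (hBB t ht).symm).const_mul _
    · have hdom : Integrable (fun t : ℝ => Real.exp (-α * t) + t ^ (2 * H) * Real.exp (-α * t))
          (volume.restrict (Set.Ioi (0:ℝ))) := by
        refine Integrable.add (integrableOn_exp_mul_Ioi (by linarith) 0) ?_
        have := integrableOn_rpow_mul_exp_neg_mul_rpow (p := 1) (s := 2 * H) (b := α)
          (by linarith) one_pos hα
        simp only [Real.rpow_one] at this
        exact this
      refine hdom.mono' ?_ ?_
      · exact hFm.stronglyMeasurable.norm.integral_prod_right'.aestronglyMeasurable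
      · filter_upwards [ae_restrict_mem measurableSet_Ioi] with t ht
        rw [Real.norm_of_nonneg (integral_nonneg fun _ => norm_nonneg _)]
        have h1 : ∫ ω, ‖Real.exp (-α * t) * B' t ω‖ ∂P
            = Real.exp (-α * t) * ∫ ω, |B t ω| ∂P := by
          rw [← integral_const_mul]
          refine integral_congr_ae ?_
          filter_upwards [hBB t ht] with ω hω
          rw [hω, norm_mul, Real.norm_eq_abs, Real.norm_eq_abs, Real.abs_exp]
        refine h1.le.trans ?_
        calc _ ≤ Real.exp (-α * t) * (1 + t ^ (2 * H)) := by
              gcongr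
              exact hn t ht
          _ = _ := by ring
  filter_upwards [hF.prod_left_ae, hae] with ω h1 hω
  refine IntegrableOn.congr_fun h1 (fun t ht => ?_) measurableSet_Ioi
  simp [hB', hω, max_eq_left (le_of_lt (show (0:ℝ) < t from ht))]

/-- Almost surely, as the integer `n → ∞`,
`e^{-α n} ∫_0^n φ(s) e^{α s} Z_s ds → λ_φ · Z_∞`. -/
theorem stmt_12 {Ω : Type*} [MeasurableSpace Ω] (P : Measure Ω) [IsProbabilityMeasure P]
    (H : ℝ) (hH1 : 1 / 2 ≤ H) (hH2 : H < 1)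
    (B : ℝ → Ω → ℝ)
    (hBmeas : ∀ t : ℝ, Measurable (B t))
    (hBgauss : ∀ (m : ℕ) (t : Fin m → ℝ) (c : Fin m → ℝ), (∀ i, 0 ≤ t i) →
      ∃ v : NNReal, Measure.map (fun ω => ∑ i, c i * B (t i) ω) P = gaussianReal 0 v)
    (hB0 : ∀ ω, B 0 ω = 0)
    (hBcov : ∀ s t : ℝ, 0 ≤ s → 0 ≤ t →
      ∫ ω, B s ω * B t ω ∂P = 1 / 2 * (s ^ (2 * H) + t ^ (2 * H) - |t - s| ^ (2 * H)))
    (hBcont : ∀ᵐ ω ∂P, ContinuousOn (fun t => B t ω) (Set.Ici (0 : ℝ)))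
    (α : ℝ) (hα : 0 < α)
    (Z : ℝ → Ω → ℝ)
    (hZ : ∀ (t : ℝ) (ω : Ω), Z t ω = ∫ s in (0:ℝ)..t, Real.exp (-α * s) * B s ω)
    (Zinf : Ω → ℝ)
    (hZinf : ∀ ω : Ω, Zinf ω = ∫ s in Set.Ioi (0:ℝ), Real.exp (-α * s) * B s ω)
    (φ : ℝ → ℝ)
    (hφmeas : Measurable φ) (hφbdd : ∃ M : ℝ, ∀ t : ℝ, |φ t| ≤ M)
    (hφper : ∀ t : ℝ, φ (t + 1) = φ t)
    (lφ : ℝ) (hlφ : lφ = (∫ s in (0:ℝ)..1, φ s * Real.exp (α * s)) / (Real.exp α - 1)) :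
    ∀ᵐ ω ∂P, Tendsto (fun n : ℕ => Real.exp (-α * n) *
        ∫ s in (0:ℝ)..(n:ℝ), φ s * Real.exp (α * s) * Z s ω)
      atTop (nhds (lφ * Zinf ω)) := by
  obtain ⟨M, hM⟩ := hφbdd
  filter_upwards [aux_int_s12 P H hH1 B hBmeas hBcov hBcont α hα] with ω hω
  have := aux_det_s12 α hα φ hφmeas M hM hφper _ hω
  rw [hlφ, hZinf]
  simp_rw [hZ]
  exact this
end

section
/- Almost surely, as the integer n → ∞, e^{−α n} ∫_0^n φ(s) X_s ds converges to λ_φ · (A_∞ + α Z_∞), where λ_φ := (∫_0^1 φ(s) e^{α s} ds)/(e^α − 1). -/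
open MeasureTheory ProbabilityTheory Filter

lemma per_nat {f : ℝ → ℝ} (hp : ∀ t, f (t+1) = f t) (n : ℕ) (t : ℝ) : f (t + n) = f t := by
  induction n with
  | zero => simp
  | succ k ih => rw [Nat.cast_succ, ← add_assoc, hp, ih]

lemma bdd_mul_int {f g : ℝ → ℝ} (hf : Measurable f) (hb : ∃ M : ℝ, ∀ t : ℝ, |f t| ≤ M)
    (hg : Continuous g) (a b : ℝ) : IntervalIntegrable (fun s => f s * g s) volume a b := by
  obtain ⟨M, hM⟩ := hb
  have h := hg.intervalIntegrable (μ := volume) a b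
  rw [intervalIntegrable_iff] at h ⊢
  exact h.bdd_mul (c := M) hf.aestronglyMeasurable (ae_of_all _ hM)

lemma per_int {f : ℝ → ℝ} (hf : Measurable f) (hb : ∃ M : ℝ, ∀ t : ℝ, |f t| ≤ M)
    (hp : ∀ t, f (t+1) = f t) (c : ℝ) (n : ℕ) :
    ∫ s in (0:ℝ)..n, f s * Real.exp (c * s)
      = (∫ s in (0:ℝ)..1, f s * Real.exp (c * s)) * ∑ k ∈ Finset.range n, (Real.exp c)^k := by
  have h1 : ∀ k : ℕ, ∫ s in (k:ℝ)..((k+1 : ℕ):ℝ), f s * Real.exp (c * s)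
      = (∫ s in (0:ℝ)..1, f s * Real.exp (c * s)) * (Real.exp c)^k := by
    intro k
    have := intervalIntegral.integral_comp_add_right (a := 0) (b := 1)
      (fun s => f s * Real.exp (c * s)) (k:ℝ)
    rw [Nat.cast_succ, add_comm (k:ℝ) 1]
    rw [zero_add] at this
    rw [← this, ← intervalIntegral.integral_mul_const]
    congr 1
    ext s
    rw [per_nat hp, ← Real.exp_nat_mul, mul_assoc, ← Real.exp_add]
    ring_nf
  have h2 := intervalIntegral.sum_integral_adjacent_intervals (a := fun k : ℕ => (k:ℝ)) (n := n)
    (f := fun s => f s * Real.exp (c * s)) (μ := volume)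
    (fun k _ => bdd_mul_int hf hb (by fun_prop) _ _)
  simp only [Nat.cast_zero] at h2
  rw [← h2, Finset.mul_sum]
  exact Finset.sum_congr rfl fun k _ => h1 k

lemma conv_lem {φ G : ℝ → ℝ} (hf : Measurable φ) (hb : ∃ M : ℝ, ∀ t : ℝ, |φ t| ≤ M)
    (hp : ∀ t, φ (t+1) = φ t) {α : ℝ} (hα : 0 < α) (hG : Continuous G) {C g : ℝ}
    (hC : ∀ t, 0 ≤ t → |G t| ≤ C) (hg : Tendsto G atTop (nhds g)) :
    Tendsto (fun n : ℕ => Real.exp (-α * n) * ∫ s in (0:ℝ)..n, φ s * (Real.exp (α * s) * G s))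
      atTop (nhds ((∫ u in Set.Ioi (0:ℝ), φ (-u) * Real.exp (-α * u)) * g)) := by
  obtain ⟨M, hM⟩ := hb
  have key : ∀ n : ℕ, Real.exp (-α * n) * ∫ s in (0:ℝ)..n, φ s * (Real.exp (α * s) * G s)
      = ∫ u in Set.Ioi (0:ℝ), (Set.Iic (n:ℝ)).indicator
        (fun u => φ (-u) * Real.exp (-α * u) * G (n - u)) u := by
    intro n
    have := intervalIntegral.integral_comp_sub_left (a := 0) (b := n)
      (fun s => φ s * (Real.exp (α * s) * G s)) (n:ℝ)
    rw [sub_zero, sub_self] at this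
    rw [← this, ← intervalIntegral.integral_const_mul, setIntegral_indicator measurableSet_Iic,
      Set.Ioi_inter_Iic, intervalIntegral.integral_of_le (Nat.cast_nonneg n)]
    congr 1
    ext u
    have h1 : φ (n - u) = φ (-u) := by rw [← per_nat hp n (-u)]; ring_nf
    have h2 : Real.exp (-α * u) = Real.exp (-α * n) * Real.exp (α * (n - u)) := by
      rw [← Real.exp_add]; ring_nf
    rw [h1, h2]; ring
  simp_rw [key]
  rw [← integral_mul_const]
  have hC0 : 0 ≤ C := (abs_nonneg _).trans (hC 0 le_rfl)
  have hM0 : 0 ≤ M := (abs_nonneg _).trans (hM 0)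
  refine tendsto_integral_of_dominated_convergence (fun u => M * C * Real.exp (-α * u)) ?_ ?_ ?_ ?_
  · intro n
    refine (Measurable.indicator ?_ measurableSet_Iic).aestronglyMeasurable
    have := hG.measurable
    fun_prop
  · exact (integrableOn_exp_mul_Ioi (by linarith) 0).const_mul _
  · intro n
    refine ae_of_all _ fun u => ?_
    by_cases hu : u ∈ Set.Iic (n:ℝ)
    · rw [Set.indicator_of_mem hu, Real.norm_eq_abs, abs_mul, abs_mul, Real.abs_exp]
      have h1 := hM (-u)
      have h2 := hC (n - u) (sub_nonneg.2 hu)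
      calc _ ≤ M * Real.exp (-α * u) * C := by gcongr
        _ = _ := by ring
    · rw [Set.indicator_of_notMem hu]; simp; positivity
  · refine ae_of_all _ fun u => ?_
    have h1 : Tendsto (fun n : ℕ => φ (-u) * Real.exp (-α * u) * G (n - u)) atTop
        (nhds (φ (-u) * Real.exp (-α * u) * g)) := by
      refine Tendsto.const_mul _ (hg.comp ?_)
      exact tendsto_atTop_add_const_right _ (-u) tendsto_natCast_atTop_atTop
    refine h1.congr' ?_
    filter_upwards [eventually_ge_atTop ⌈u⌉₊] with n hn
    rw [Set.indicator_of_mem]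
    exact Nat.ceil_le.1 hn

lemma exp_lt_one_aux {α : ℝ} (hα : 0 < α) : Real.exp (-α) < 1 := by
  rw [← Real.exp_zero]; exact Real.exp_lt_exp.2 (by linarith)

lemma exp_nat_zero {α : ℝ} (hα : 0 < α) :
    Tendsto (fun n : ℕ => Real.exp (-α * n)) atTop (nhds 0) := by
  have h := tendsto_pow_atTop_nhds_zero_of_lt_one (Real.exp_pos (-α)).le
    (exp_lt_one_aux hα)
  refine h.congr fun n => ?_
  rw [← Real.exp_nat_mul]; ring_nf

lemma K_eq {φ : ℝ → ℝ} (hf : Measurable φ) (hb : ∃ M : ℝ, ∀ t : ℝ, |φ t| ≤ M)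
    (hp : ∀ t, φ (t+1) = φ t) {α : ℝ} (hα : 0 < α) :
    (∫ u in Set.Ioi (0:ℝ), φ (-u) * Real.exp (-α * u))
      = (∫ s in (0:ℝ)..1, φ s * Real.exp (α * s)) / (Real.exp α - 1) := by
  have h := conv_lem hf hb hp hα (G := fun _ => 1) continuous_const (C := 1) (g := 1)
    (by simp) tendsto_const_nhds
  simp only [mul_one] at h
  refine tendsto_nhds_unique h ?_
  have h1 : 1 < Real.exp α := Real.one_lt_exp_iff.2 hα
  have h2 : Tendsto (fun n : ℕ => (∫ s in (0:ℝ)..1, φ s * Real.exp (α * s)) / (Real.exp α - 1)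
      * (1 - Real.exp (-α * n))) atTop (nhds ((∫ s in (0:ℝ)..1, φ s * Real.exp (α * s)) / (Real.exp α - 1)
      * (1 - 0))) := ((exp_nat_zero hα).const_sub 1).const_mul _
  rw [sub_zero, mul_one] at h2
  refine h2.congr fun n => ?_
  rw [per_int hf hb hp, geom_sum_eq h1.ne', ← Real.exp_nat_mul]
  have h3 : Real.exp (-α * n) * Real.exp (n * α) = 1 := by
    rw [← Real.exp_add]; simp; ring
  have h4 : Real.exp α - 1 ≠ 0 := by linarith
  rw [mul_div_assoc', mul_div_assoc', div_mul_eq_mul_div]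
  congr 1
  linear_combination (-(∫ s in (0:ℝ)..1, φ s * Real.exp (α * s))) * h3

lemma A_eq {L : ℝ → ℝ} (hf : Measurable L) (hb : ∃ M : ℝ, ∀ t : ℝ, |L t| ≤ M)
    (hp : ∀ t, L (t+1) = L t) {α : ℝ} (hα : 0 < α) 
    (hi : IntegrableOn (fun s => Real.exp (-α * s) * L s) (Set.Ioi 0)) :
    (∫ u in Set.Ioi (0:ℝ), Real.exp (-α * u) * L u)
      = (∫ s in (0:ℝ)..1, Real.exp (-α * s) * L s) / (1 - Real.exp (-α)) := by
  have h := (intervalIntegral_tendsto_integral_Ioi 0 hi tendsto_id).comp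
    (tendsto_natCast_atTop_atTop (R := ℝ))
  refine tendsto_nhds_unique h ?_
  have h1 : Real.exp (-α) < 1 := exp_lt_one_aux hα
  have h2 : Tendsto (fun n : ℕ => (∫ s in (0:ℝ)..1, Real.exp (-α * s) * L s) / (1 - Real.exp (-α))
      * (1 - Real.exp (-α * n))) atTop (nhds ((∫ s in (0:ℝ)..1, Real.exp (-α * s) * L s) / (1 - Real.exp (-α))
      * (1 - 0))) := ((exp_nat_zero hα).const_sub 1).const_mul _
  rw [sub_zero, mul_one] at h2
  refine h2.congr fun n => ?_
  have := per_int hf hb hp (-α) n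
  simp only [mul_comm (L _)] at this
  simp only [Function.comp, id]
  rw [this, geom_sum_eq h1.ne, ← Real.exp_nat_mul, mul_comm (n:ℝ)]
  have h4 : Real.exp (-α) - 1 ≠ 0 := by linarith
  have h5 : 1 - Real.exp (-α) ≠ 0 := by linarith
  field_simp
  ring

lemma det_lem {φ L b : ℝ → ℝ} (hf : Measurable φ) (hb : ∃ M : ℝ, ∀ t : ℝ, |φ t| ≤ M)
    (hp : ∀ t, φ (t+1) = φ t) 
    (hLf : Measurable L) (hLb : ∃ M : ℝ, ∀ t : ℝ, |L t| ≤ M)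
    (hLp : ∀ t, L (t+1) = L t) {α : ℝ} (hα : 0 < α) (hbc : Continuous b)
    (hbi : IntegrableOn (fun s => Real.exp (-(α/2) * s) * b s) (Set.Ioi 0)) :
    Tendsto (fun n : ℕ => Real.exp (-α * n) * ∫ s in (0:ℝ)..n, φ s * 
        (Real.exp (α * s) * (∫ u in (0:ℝ)..s, Real.exp (-α * u) * L u) 
         + α * Real.exp (α * s) * (∫ u in (0:ℝ)..s, Real.exp (-α * u) * b u) + b s))
      atTop (nhds (((∫ s in (0:ℝ)..1, φ s * Real.exp (α * s)) / (Real.exp α - 1)) *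
        ((∫ s in (0:ℝ)..1, Real.exp (-α * s) * L s) / (1 - Real.exp (-α)) 
          + α * ∫ u in Set.Ioi (0:ℝ), Real.exp (-α * u) * b u))) := by
  have hLi : IntegrableOn (fun s => Real.exp (-α * s) * L s) (Set.Ioi 0) := by
    obtain ⟨M, hM⟩ := hLb
    exact (integrableOn_exp_mul_Ioi (by linarith) 0).mul_bdd (c := M)
      hLf.aestronglyMeasurable (ae_of_all _ hM)
  have hbi' : IntegrableOn (fun s => Real.exp (-α * s) * b s) (Set.Ioi 0) := by
    have := hbi.bdd_mul (c := 1) (f := fun s => Real.exp (-(α/2) * s)) (by fun_prop) (by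
      filter_upwards [ae_restrict_mem measurableSet_Ioi] with s hs
      rw [Real.norm_eq_abs, Real.abs_exp, Real.exp_le_one_iff]
      have : 0 < s := hs
      nlinarith)
    refine this.congr (ae_of_all _ fun s => ?_)
    simp only
    rw [← mul_assoc, ← Real.exp_add]; ring_nf
  have hL1 : ∀ a c, IntervalIntegrable (fun s => Real.exp (-α * s) * L s) volume a c := fun a c => by
    simpa only [mul_comm] using bdd_mul_int hLf hLb (g := fun s => Real.exp (-α * s)) (by fun_prop) a c
  have hb1 : ∀ a c, IntervalIntegrable (fun s => Real.exp (-α * s) * b s) volume a c := fun a c =>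
    Continuous.intervalIntegrable (by fun_prop) _ _
  have bd : ∀ f : ℝ → ℝ, IntegrableOn f (Set.Ioi 0) → ∀ t, 0 ≤ t → 
      |∫ s in (0:ℝ)..t, f s| ≤ ∫ s in Set.Ioi (0:ℝ), |f s| := by
    intro f hf t ht
    rw [intervalIntegral.integral_of_le ht]
    refine (abs_integral_le_integral_abs).trans ?_
    exact setIntegral_mono_set hf.abs (ae_of_all _ fun _ => abs_nonneg _)
      (ae_of_all _ Set.Ioc_subset_Ioi_self)
  set G : ℝ → ℝ := fun s => (∫ u in (0:ℝ)..s, Real.exp (-α * u) * L u) 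
    + α * (∫ u in (0:ℝ)..s, Real.exp (-α * u) * b u) with hG
  have hGc : Continuous G := (intervalIntegral.continuous_primitive hL1 0).add 
    ((intervalIntegral.continuous_primitive hb1 0).const_mul α)
  have main := conv_lem hf hb hp hα hGc (C := (∫ s in Set.Ioi (0:ℝ), |Real.exp (-α * s) * L s|)
      + α * ∫ s in Set.Ioi (0:ℝ), |Real.exp (-α * s) * b s|) (by
      intro t ht
      refine (abs_add_le _ _).trans ?_
      rw [abs_mul, abs_of_pos hα]
      have h1 := bd _ hLi t ht
      have h2 := bd _ hbi' t ht
      gcongr) ((intervalIntegral_tendsto_integral_Ioi 0 hLi tendsto_id).add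
        ((intervalIntegral_tendsto_integral_Ioi 0 hbi' tendsto_id).const_mul α))
  rw [K_eq hf hb hp hα, A_eq hLf hLb hLp hα hLi] at main
  have rem : Tendsto (fun n : ℕ => Real.exp (-α * n) * ∫ s in (0:ℝ)..n, φ s * b s) atTop (nhds 0) := by
    obtain ⟨M, hM⟩ := hb
    have hM0 : 0 ≤ M := (abs_nonneg _).trans (hM 0)
    set J := ∫ s in Set.Ioi (0:ℝ), |M * (Real.exp (-(α/2) * s) * b s)| with hJ
    have hz := (exp_nat_zero (half_pos hα)).mul_const J
    rw [zero_mul] at hz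
    refine squeeze_zero_norm (fun n => ?_) hz
    rw [norm_mul, Real.norm_eq_abs, Real.abs_exp]
    have e1 : Real.exp (-α * n) = Real.exp (-(α/2)*n) * Real.exp (-(α/2)*n) := by
      rw [← Real.exp_add]; ring_nf
    rw [e1, mul_assoc]
    gcongr
    rw [← Real.norm_of_nonneg (Real.exp_pos (-(α/2)*n)).le, ← norm_mul, 
      ← intervalIntegral.integral_const_mul, intervalIntegral.integral_of_le (Nat.cast_nonneg n)]
    have hI : IntegrableOn (fun s => |M * (Real.exp (-(α/2) * s) * b s)|) (Set.Ioi 0) := (hbi.const_mul M).abs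
    refine (norm_integral_le_integral_norm _).trans ((setIntegral_mono_on ?_ 
      (hI.mono_set Set.Ioc_subset_Ioi_self) measurableSet_Ioc ?_).trans 
      (setIntegral_mono_set hI (ae_of_all _ fun _ => abs_nonneg _)
      (ae_of_all _ Set.Ioc_subset_Ioi_self)))
    · have := ((bdd_mul_int hf ⟨M, hM⟩ hbc 0 n).const_mul (Real.exp (-(α/2)*n))).norm
      rwa [intervalIntegrable_iff_integrableOn_Ioc_of_le (Nat.cast_nonneg n)] at this
    · intro s hs
      simp only [norm_mul, Real.norm_eq_abs, abs_mul, Real.abs_exp, abs_abs]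
      have h1 := hM s
      have h2 : Real.exp (-(α/2)*n) ≤ Real.exp (-(α/2)*s) := by
        apply Real.exp_le_exp.2
        have := hs.2
        nlinarith
      calc _ ≤ Real.exp (-(α/2)*s) * (M * |b s|) := by gcongr
        _ = _ := by rw [abs_of_nonneg hM0]; ring
  have tot := main.add rem
  rw [add_zero] at tot
  refine tot.congr fun n => ?_
  rw [← mul_add, ← intervalIntegral.integral_add (bdd_mul_int hf hb (by fun_prop) _ _) 
    (bdd_mul_int hf hb hbc _ _)]
  congr 2
  ext s
  simp only [hG]
  ring

lemma prob_lem {Ω : Type*} [MeasurableSpace Ω] (P : Measure Ω) [IsProbabilityMeasure P]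
    (H : ℝ) (hH1 : 1 / 2 ≤ H) 
    (B : ℝ → Ω → ℝ)
    (hBmeas : ∀ t : ℝ, Measurable (B t))
    (hBgauss : ∀ (m : ℕ) (t : Fin m → ℝ) (c : Fin m → ℝ), (∀ i, 0 ≤ t i) →
      ∃ v : NNReal, Measure.map (fun ω => ∑ i, c i * B (t i) ω) P = gaussianReal 0 v)
    (hBcov : ∀ s t : ℝ, 0 ≤ s → 0 ≤ t →
      ∫ ω, B s ω * B t ω ∂P = 1 / 2 * (s ^ (2 * H) + t ^ (2 * H) - |t - s| ^ (2 * H)))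
    (hBcont : ∀ᵐ ω ∂P, ContinuousOn (fun t => B t ω) (Set.Ici (0 : ℝ)))
    (β : ℝ) (hβ : 0 < β) :
    ∀ᵐ ω ∂P, Continuous (fun t => B (max t 0) ω) ∧ 
      IntegrableOn (fun s => Real.exp (-β * s) * B (max s 0) ω) (Set.Ioi 0) := by
  classical
  have hc : ∀ᵐ ω ∂P, Continuous (fun t => B (max t 0) ω) := by
    filter_upwards [hBcont] with ω h
    exact h.comp_continuous (f := fun t : ℝ => max t 0) (by fun_prop) (fun t => Set.mem_Ici.2 (le_max_right t 0))
  obtain ⟨S, hSsub, hSm, hS⟩ : ∃ S, S ⊆ {ω | Continuous (fun t => B (max t 0) ω)} ∧ MeasurableSet S ∧ ∀ᵐ ω ∂P, ω ∈ S := by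
    obtain ⟨T, h1, h2, h3⟩ := exists_measurable_superset_of_null (ae_iff.1 hc)
    refine ⟨Tᶜ, fun ω hω => by_contra fun h => hω (h1 h), h2.compl, ?_⟩
    exact measure_eq_zero_iff_ae_notMem.1 h3
  set D : ℝ → Ω → ℝ := fun t ω => S.indicator (fun ω => B (max t 0) ω) ω with hD
  have hDm : Measurable (Function.uncurry D) := by
    refine measurable_uncurry_of_continuous_of_measurable (fun ω => ?_)
      (fun t => (hBmeas _).indicator hSm)
    by_cases hω : ω ∈ S
    · simpa [hD, Set.indicator_of_mem hω] using hSsub hω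
    · simp [hD, Set.indicator_of_notMem hω, continuous_const]
  have hsq : ∀ s, 0 ≤ s → Integrable (fun ω => B s ω ^ 2) P ∧ ∫ ω, B s ω ^ 2 ∂P = s ^ (2*H) := by
    intro s hs
    constructor
    · obtain ⟨v, hv⟩ := hBgauss 1 (fun _ => s) (fun _ => 1) (fun _ => hs)
      simp at hv
      have h2 : MemLp id 2 (Measure.map (B s) P) := by
        have hv' : Measure.map (B s) P = gaussianReal 0 v := hv
        rw [hv']
        exact memLp_id_gaussianReal' 2 (by simp)
      exact ((memLp_map_measure_iff (by fun_prop) (hBmeas s).aemeasurable).1 h2).integrable_sq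
    · have := hBcov s s hs hs
      simp only [pow_two, this, sub_self, abs_zero]
      rw [Real.zero_rpow (by linarith)]; ring
  have hdom : IntegrableOn (fun s : ℝ => Real.exp (-β * s) * (1 + s ^ (2*H))) (Set.Ioi 0) := by
    have h1 := integrableOn_exp_mul_Ioi (a := -β) (by linarith) 0
    have h2 := integrableOn_rpow_mul_exp_neg_mul_rpow (s := 2*H) (p := 1) (b := β) (by linarith) one_pos hβ
    refine (h1.add h2).congr (ae_of_all _ fun s => ?_)
    simp; ring
  have hE : ∀ s, 0 ≤ s → ∫⁻ ω, ‖D s ω‖ₑ ∂P ≤ ENNReal.ofReal (1 + s ^ (2*H)) := by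
    intro s hs
    obtain ⟨hi, he⟩ := hsq s hs
    have : 1 + s^(2*H) = ∫ ω, (1 + B s ω ^ 2) ∂P := by
      rw [integral_add (integrable_const _) hi, he]; simp
    rw [this, ofReal_integral_eq_lintegral_ofReal (f := fun ω => 1 + B s ω ^ 2) ((integrable_const _).add hi)
      (ae_of_all _ fun ω => by simp only [Pi.zero_apply]; positivity)]
    refine lintegral_mono fun ω => ?_
    rw [← ofReal_norm_eq_enorm]
    apply ENNReal.ofReal_le_ofReal
    refine (norm_indicator_le_norm_self _ _).trans ?_
    rw [max_eq_left hs, Real.norm_eq_abs]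
    nlinarith [sq_nonneg (|B s ω| - 1), sq_abs (B s ω)]
  have hint : ∀ᵐ ω ∂P, IntegrableOn (fun s => Real.exp (-β * s) * D s ω) (Set.Ioi 0) := by
    have hfin : ∫⁻ ω, (∫⁻ s in Set.Ioi (0:ℝ), ‖Real.exp (-β * s) * D s ω‖ₑ) ∂P < ⊤ := by
      rw [lintegral_lintegral_swap]
      · refine lt_of_le_of_lt (setLIntegral_mono' measurableSet_Ioi 
          (g := fun s => ‖Real.exp (-β * s) * (1 + s ^ (2*H))‖ₑ) fun s hs => ?_) hdom.2
        simp only [enorm_mul]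
        rw [lintegral_const_mul]
        · gcongr
          refine (hE s (le_of_lt hs)).trans (Real.ofReal_le_enorm _)
        · exact (hDm.comp measurable_prodMk_left).enorm
      · apply Measurable.aemeasurable
        have : Measurable fun p : Ω × ℝ => D p.2 p.1 := hDm.comp measurable_swap
        exact ((by fun_prop : Measurable fun p : Ω × ℝ => Real.exp (-β * p.2)).mul this).enorm
    have hm : Measurable fun ω => ∫⁻ s in Set.Ioi (0:ℝ), ‖Real.exp (-β * s) * D s ω‖ₑ := by
      have : Measurable fun p : Ω × ℝ => D p.2 p.1 := hDm.comp measurable_swap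
      exact Measurable.lintegral_prod_right' ((by fun_prop : Measurable fun p : Ω × ℝ => Real.exp (-β * p.2)).mul this).enorm
    filter_upwards [ae_lt_top hm hfin.ne] with ω hω
    refine ⟨?_, hω⟩
    have := hDm.comp (measurable_prodMk_right (y := ω))
    exact ((by fun_prop : Measurable fun s : ℝ => Real.exp (-β * s)).mul this).aestronglyMeasurable
  filter_upwards [hc, hS, hint] with ω h1 h2 h3
  refine ⟨h1, ?_⟩
  simpa [hD, Set.indicator_of_mem h2] using h3

theorem stmt_13 {Ω : Type*} [MeasurableSpace Ω] (P : Measure Ω) [IsProbabilityMeasure P]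
    (H : ℝ) (hH1 : 1 / 2 ≤ H) (hH2 : H < 1)
    (B : ℝ → Ω → ℝ)
    (hBmeas : ∀ t : ℝ, Measurable (B t))
    (hBgauss : ∀ (m : ℕ) (t : Fin m → ℝ) (c : Fin m → ℝ), (∀ i, 0 ≤ t i) →
      ∃ v : NNReal, Measure.map (fun ω => ∑ i, c i * B (t i) ω) P = gaussianReal 0 v)
    (hB0 : ∀ ω, B 0 ω = 0)
    (hBcov : ∀ s t : ℝ, 0 ≤ s → 0 ≤ t →
      ∫ ω, B s ω * B t ω ∂P = 1 / 2 * (s ^ (2 * H) + t ^ (2 * H) - |t - s| ^ (2 * H)))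
    (hBcont : ∀ᵐ ω ∂P, ContinuousOn (fun t => B t ω) (Set.Ici (0 : ℝ)))
    (α : ℝ) (hα : 0 < α)
    (Z : ℝ → Ω → ℝ)
    (hZ : ∀ (t : ℝ) (ω : Ω), Z t ω = ∫ s in (0:ℝ)..t, Real.exp (-α * s) * B s ω)
    (Zinf : Ω → ℝ)
    (hZinf : ∀ ω : Ω, Zinf ω = ∫ s in Set.Ioi (0:ℝ), Real.exp (-α * s) * B s ω)
    (L : ℝ → ℝ)
    (hLmeas : Measurable L) (hLbdd : ∃ M : ℝ, ∀ t : ℝ, |L t| ≤ M)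
    (hLper : ∀ t : ℝ, L (t + 1) = L t)
    (A : ℝ → ℝ) (hA : ∀ t : ℝ, A t = ∫ s in (0:ℝ)..t, Real.exp (-α * s) * L s)
    (Ainf : ℝ) (hAinf : Ainf = A 1 / (1 - Real.exp (-α)))
    (X : ℝ → Ω → ℝ)
    (hX : ∀ (t : ℝ) (ω : Ω), X t ω = Real.exp (α * t) * A t
        + α * Real.exp (α * t) * Z t ω + B t ω)
    (φ : ℝ → ℝ)
    (hφmeas : Measurable φ) (hφbdd : ∃ M : ℝ, ∀ t : ℝ, |φ t| ≤ M)
    (hφper : ∀ t : ℝ, φ (t + 1) = φ t)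
    (lφ : ℝ) (hlφ : lφ = (∫ s in (0:ℝ)..1, φ s * Real.exp (α * s)) / (Real.exp α - 1)) :
    ∀ᵐ ω ∂P, Tendsto (fun n : ℕ => Real.exp (-α * n) *
        ∫ s in (0:ℝ)..(n:ℝ), φ s * X s ω)
      atTop (nhds (lφ * (Ainf + α * Zinf ω))) := by
  filter_upwards [prob_lem P H hH1 B hBmeas hBgauss hBcov hBcont (α/2) (half_pos hα)] with ω ⟨hc, hi⟩
  have h := det_lem hφmeas hφbdd hφper hLmeas hLbdd hLper hα hc hi
  have hz : ∫ u in Set.Ioi (0:ℝ), Real.exp (-α * u) * B (max u 0) ω = Zinf ω := by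
    rw [hZinf]
    refine setIntegral_congr_fun measurableSet_Ioi fun u hu => ?_
    simp only [max_eq_left (le_of_lt (Set.mem_Ioi.1 hu))]
  rw [hz] at h
  rw [hlφ, hAinf, hA]
  refine h.congr fun n => ?_
  congr 1
  refine intervalIntegral.integral_congr fun s hs => ?_
  rw [Set.uIcc_of_le (Nat.cast_nonneg n)] at hs
  have hz2 : ∫ u in (0:ℝ)..s, Real.exp (-α * u) * B (max u 0) ω = Z s ω := by
    rw [hZ]
    refine intervalIntegral.integral_congr fun u hu => ?_
    rw [Set.uIcc_of_le hs.1] at hu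
    simp only [max_eq_left hu.1]
  simp only [hz2, hX, hA, max_eq_left hs.1]
end

section
/- Almost surely, as the integer n → ∞, e^{−2α n} ∫_0^n X_s² ds converges to (A_∞ + α Z_∞)²/(2α). -/
open MeasureTheory ProbabilityTheory Filter

lemma aux_dct1 (α : ℝ) (hα : 0 < α) (g : ℝ → ℝ) (hg : IntegrableOn g (Set.Ioi 0)) :
    Tendsto (fun n : ℕ => Real.exp (-2 * α * n) * ∫ s in (0:ℝ)..(n:ℝ), Real.exp (2 * α * s) * g s)
      atTop (nhds 0) := by
  have h1 : ∀ n : ℕ, Real.exp (-2 * α * n) * ∫ s in (0:ℝ)..(n:ℝ), Real.exp (2 * α * s) * g s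
      = ∫ s in Set.Ioi (0:ℝ), (Set.Ioc (0:ℝ) n).indicator
          (fun s => Real.exp (2 * α * (s - n)) * g s) s := by
    intro n
    rw [intervalIntegral.integral_of_le (by positivity), setIntegral_indicator measurableSet_Ioc,
      Set.inter_eq_right.mpr Set.Ioc_subset_Ioi_self, ← integral_const_mul]
    congr 1
    ext s
    rw [← mul_assoc, ← Real.exp_add]
    ring_nf
  simp_rw [h1]
  have h0 : (0:ℝ) = ∫ s in Set.Ioi (0:ℝ), (0:ℝ) := by simp
  suffices hs : Tendsto (fun n : ℕ => ∫ s in Set.Ioi (0:ℝ), (Set.Ioc (0:ℝ) n).indicator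
          (fun s => Real.exp (2 * α * (s - n)) * g s) s) atTop
          (nhds (∫ s in Set.Ioi (0:ℝ), (0:ℝ))) by
    rwa [← h0] at hs
  apply tendsto_integral_of_dominated_convergence (fun s => |g s|)
  · intro n
    apply AEStronglyMeasurable.indicator _ measurableSet_Ioc
    exact (Continuous.aestronglyMeasurable (by fun_prop)).mul hg.aestronglyMeasurable
  · exact hg.abs
  · intro n
    refine Eventually.of_forall fun s => ?_
    by_cases hs : s ∈ Set.Ioc (0:ℝ) n
    · rw [Set.indicator_of_mem hs, norm_mul, Real.norm_eq_abs, Real.norm_eq_abs, Real.abs_exp]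
      have : Real.exp (2 * α * (s - n)) ≤ 1 := by
        rw [Real.exp_le_one_iff]
        have := hs.2
        nlinarith
      exact mul_le_of_le_one_left (abs_nonneg _) this
    · rw [Set.indicator_of_notMem hs]; simp
  · refine (ae_restrict_iff' measurableSet_Ioi).mpr (Eventually.of_forall fun s hs => ?_)
    have h2 : Tendsto (fun n : ℕ => Real.exp (2 * α * (s - n)) * g s) atTop (nhds 0) := by
      have : Tendsto (fun n : ℕ => 2 * α * (s - n)) atTop atBot := by
        apply Tendsto.const_mul_atBot (by positivity)
        have := tendsto_atBot_add_const_left atTop s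
          (tendsto_neg_atTop_atBot.comp (tendsto_natCast_atTop_atTop (R := ℝ)))
        simpa [sub_eq_add_neg, Function.comp_def] using this
      simpa using (Real.tendsto_exp_atBot.comp this).mul_const (g s)
    refine h2.congr' ?_
    filter_upwards [(tendsto_natCast_atTop_atTop (R := ℝ)).eventually_ge_atTop s] with n hn
    rw [Set.indicator_of_mem]
    exact ⟨hs, hn⟩

lemma aux_dct2 (α : ℝ) (hα : 0 < α) (h : ℝ → ℝ) (hh : Measurable h) (K l : ℝ)
    (hK : ∀ s, 0 ≤ s → |h s| ≤ K) (hl : Tendsto h atTop (nhds l)) :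
    Tendsto (fun n : ℕ => Real.exp (-2 * α * n) * ∫ s in (0:ℝ)..(n:ℝ), Real.exp (2 * α * s) * h s)
      atTop (nhds (l / (2 * α))) := by
  have hi : IntegrableOn (fun s => Real.exp (-(2 * α) * s)) (Set.Ioi (0:ℝ)) :=
    integrableOn_exp_mul_Ioi (by linarith) 0
  have h1 : ∀ n : ℕ, Real.exp (-2 * α * n) * ∫ s in (0:ℝ)..(n:ℝ), Real.exp (2 * α * s) * h s
      = ∫ s in Set.Ioi (0:ℝ), (Set.Ioc (0:ℝ) n).indicator
          (fun s => Real.exp (-(2 * α) * s) * h (n - s)) s := by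
    intro n
    have := intervalIntegral.integral_comp_sub_left (a := 0) (b := (n:ℝ))
      (fun s => Real.exp (2 * α * s) * h s) n
    rw [sub_self, sub_zero] at this
    rw [← this, intervalIntegral.integral_of_le (by positivity),
      setIntegral_indicator measurableSet_Ioc,
      Set.inter_eq_right.mpr Set.Ioc_subset_Ioi_self, ← integral_const_mul]
    congr 1
    ext s
    rw [← mul_assoc, ← Real.exp_add]
    ring_nf
  simp_rw [h1]
  have h0 : l / (2 * α) = ∫ s in Set.Ioi (0:ℝ), Real.exp (-(2 * α) * s) * l := by
    rw [integral_mul_const, integral_exp_mul_Ioi (by linarith) 0]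
    simp; field_simp
  rw [h0]
  apply tendsto_integral_of_dominated_convergence (fun s => Real.exp (-(2 * α) * s) * K)
  · intro n
    apply AEStronglyMeasurable.indicator _ measurableSet_Ioc
    exact Measurable.aestronglyMeasurable (by fun_prop)
  · exact hi.mul_const K
  · intro n
    refine Eventually.of_forall fun s => ?_
    have hK0 : 0 ≤ K := (abs_nonneg _).trans (hK 0 le_rfl)
    by_cases hs : s ∈ Set.Ioc (0:ℝ) n
    · rw [Set.indicator_of_mem hs, norm_mul, Real.norm_eq_abs, Real.norm_eq_abs, Real.abs_exp]
      have := hK (n - s) (by linarith [hs.2])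
      gcongr
    · rw [Set.indicator_of_notMem hs]; simp; positivity
  · refine (ae_restrict_iff' measurableSet_Ioi).mpr (Eventually.of_forall fun s hs => ?_)
    have h2 : Tendsto (fun n : ℕ => Real.exp (-(2 * α) * s) * h (n - s)) atTop
        (nhds (Real.exp (-(2 * α) * s) * l)) := by
      apply Tendsto.const_mul
      apply hl.comp
      have := tendsto_atTop_add_const_right atTop (-s) (tendsto_natCast_atTop_atTop (R := ℝ))
      simpa [sub_eq_add_neg] using this
    refine h2.congr' ?_
    filter_upwards [(tendsto_natCast_atTop_atTop (R := ℝ)).eventually_ge_atTop s] with n hn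
    rw [Set.indicator_of_mem]
    exact ⟨hs, hn⟩

lemma aux_prim_bound (f : ℝ → ℝ) (hf : IntegrableOn f (Set.Ioi 0)) (t : ℝ) (ht : 0 ≤ t) :
    |∫ s in (0:ℝ)..t, f s| ≤ ∫ s in Set.Ioi (0:ℝ), |f s| := by
  rw [intervalIntegral.integral_of_le ht]
  refine abs_integral_le_integral_abs.trans ?_
  exact setIntegral_mono_set hf.abs (Eventually.of_forall fun _ => abs_nonneg _)
    (LE.le.eventuallyLE Set.Ioc_subset_Ioi_self)

lemma aux_path (α : ℝ) (hα : 0 < α) (b : ℝ → ℝ) (hb : Continuous b)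
    (hb2 : IntegrableOn (fun s => Real.exp (-α * s) * b s ^ 2) (Set.Ioi 0))
    (L : ℝ → ℝ)
    (hLmeas : Measurable L) (hLbdd : ∃ M : ℝ, ∀ t : ℝ, |L t| ≤ M)
    (hLper : ∀ t : ℝ, L (t + 1) = L t)
    (A : ℝ → ℝ) (hA : ∀ t : ℝ, A t = ∫ s in (0:ℝ)..t, Real.exp (-α * s) * L s)
    (Ainf : ℝ) (hAinf : Ainf = A 1 / (1 - Real.exp (-α))) (z : ℝ → ℝ)
    (hz : ∀ t, z t = ∫ s in (0:ℝ)..t, Real.exp (-α * s) * b s) :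
    Tendsto (fun n : ℕ => Real.exp (-2 * α * n) *
        ∫ s in (0:ℝ)..(n:ℝ), (Real.exp (α * s) * A s + α * Real.exp (α * s) * z s + b s) ^ 2)
      atTop (nhds ((Ainf + α * ∫ s in Set.Ioi (0:ℝ), Real.exp (-α * s) * b s) ^ 2 / (2 * α))) := by
  obtain ⟨M, hM⟩ := hLbdd
  have hie : IntegrableOn (fun s => Real.exp (-α * s)) (Set.Ioi (0:ℝ)) :=
    integrableOn_exp_mul_Ioi (by linarith) 0
  have hib : IntegrableOn (fun s => Real.exp (-α * s) * b s) (Set.Ioi 0) := by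
    refine Integrable.mono' (hie.add hb2) (Continuous.aestronglyMeasurable (by fun_prop)) ?_
    refine Eventually.of_forall fun s => ?_
    simp only [norm_mul, Real.norm_eq_abs, Real.abs_exp, Pi.add_apply]
    have : |b s| ≤ 1 + b s ^ 2 := by
      rw [← sq_abs]; nlinarith [sq_nonneg (|b s| - 1), abs_nonneg (b s)]
    nlinarith [Real.exp_pos (-α * s)]
  have hiL : IntegrableOn (fun s => Real.exp (-α * s) * L s) (Set.Ioi 0) := by
    refine Integrable.mono' (hie.mul_const M) (Measurable.aestronglyMeasurable (by fun_prop)) ?_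
    refine Eventually.of_forall fun s => ?_
    simp only [norm_mul, Real.norm_eq_abs, Real.abs_exp]
    have := hM s
    gcongr
  have hiiL : ∀ a c, IntervalIntegrable (fun s => Real.exp (-α * s) * L s) volume a c := by
    intro a c
    have h1 : IntervalIntegrable (fun s => Real.exp (-α * s) * M) volume a c :=
      Continuous.intervalIntegrable (by fun_prop) _ _
    refine h1.mono_fun' (Measurable.aestronglyMeasurable (by fun_prop)) ?_
    refine Eventually.of_forall fun s => ?_
    simp only [norm_mul, Real.norm_eq_abs, Real.abs_exp]
    have := hM s
    gcongr
  have hiib : ∀ a c, IntervalIntegrable (fun s => Real.exp (-α * s) * b s) volume a c :=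
    fun a c => Continuous.intervalIntegrable (by fun_prop) _ _
  have hAc : Continuous A := by
    rw [funext hA]; exact intervalIntegral.continuous_primitive hiiL 0
  have hzc : Continuous z := by
    rw [funext hz]; exact intervalIntegral.continuous_primitive hiib 0
  have hAl0 : Tendsto A atTop (nhds (∫ s in Set.Ioi (0:ℝ), Real.exp (-α * s) * L s)) := by
    rw [funext hA]; exact intervalIntegral_tendsto_integral_Ioi 0 hiL tendsto_id
  have hzl : Tendsto z atTop (nhds (∫ s in Set.Ioi (0:ℝ), Real.exp (-α * s) * b s)) := by
    rw [funext hz]; exact intervalIntegral_tendsto_integral_Ioi 0 hib tendsto_id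
  have hrec : ∀ t, A (t + 1) = A 1 + Real.exp (-α) * A t := by
    intro t
    have h1 := intervalIntegral.integral_comp_add_right (a := 0) (b := t)
      (fun s => Real.exp (-α * s) * L s) 1
    simp only [hLper, zero_add] at h1
    rw [hA, hA 1, hA t, ← intervalIntegral.integral_add_adjacent_intervals (hiiL 0 1) (hiiL 1 (t+1)),
      ← h1, ← intervalIntegral.integral_const_mul]
    congr 2
    ext s
    rw [← mul_assoc, ← Real.exp_add]
    ring_nf
  have hAl : Tendsto A atTop (nhds Ainf) := by
    convert hAl0 using 2
    set I := ∫ s in Set.Ioi (0:ℝ), Real.exp (-α * s) * L s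
    have h1 : Tendsto (fun t => A (t + 1)) atTop (nhds I) :=
      hAl0.comp (tendsto_atTop_add_const_right _ _ tendsto_id)
    have h2 : Tendsto (fun t => A (t + 1)) atTop (nhds (A 1 + Real.exp (-α) * I)) := by
      rw [funext hrec]; exact (hAl0.const_mul _).const_add _
    have h3 := tendsto_nhds_unique h1 h2
    have h4 : Real.exp (-α) < 1 := by rw [Real.exp_lt_one_iff]; linarith
    rw [hAinf, div_eq_iff (by linarith)]
    linarith
  set Zi := ∫ s in Set.Ioi (0:ℝ), Real.exp (-α * s) * b s
  obtain ⟨K, hK⟩ : ∃ K, ∀ s, 0 ≤ s → |A s + α * z s| ≤ K := by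
    refine ⟨(∫ s in Set.Ioi (0:ℝ), |Real.exp (-α * s) * L s|) + 
      α * ∫ s in Set.Ioi (0:ℝ), |Real.exp (-α * s) * b s|, fun s hs => ?_⟩
    refine (abs_add_le _ _).trans ?_
    rw [abs_mul, abs_of_pos hα, hA, hz]
    have h1 := aux_prim_bound _ hiL s hs
    have h2 := aux_prim_bound _ hib s hs
    gcongr
  have hYc : Continuous (fun s => A s + α * z s) := by fun_prop
  have T1 := aux_dct2 α hα (fun s => (A s + α * z s) ^ 2) (by fun_prop) (K ^ 2)
    ((Ainf + α * Zi) ^ 2)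
    (fun s hs => by rw [abs_pow]; have := hK s hs; gcongr) ((hAl.add (hzl.const_mul α)).pow 2)
  have hg : IntegrableOn (fun s => 2 * (A s + α * z s) * (Real.exp (-α * s) * b s)
      + Real.exp (-α * s) * (Real.exp (-α * s) * b s ^ 2)) (Set.Ioi 0) := by
    apply Integrable.add
    · refine Integrable.bdd_mul (c := 2 * K) hib (Continuous.aestronglyMeasurable (by fun_prop)) ?_
      refine (ae_restrict_iff' measurableSet_Ioi).mpr (Eventually.of_forall fun s hs => ?_)
      rw [norm_mul, Real.norm_eq_abs, Real.norm_eq_abs]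
      have := hK s (le_of_lt hs)
      simpa using this
    · refine Integrable.bdd_mul (c := 1) hb2 (Continuous.aestronglyMeasurable (by fun_prop)) ?_
      refine (ae_restrict_iff' measurableSet_Ioi).mpr (Eventually.of_forall fun s hs => ?_)
      rw [Real.norm_eq_abs, Real.abs_exp, Real.exp_le_one_iff]
      have : 0 < s := hs
      nlinarith
  have T2 := aux_dct1 α hα _ hg
  have T := T1.add T2
  rw [add_zero] at T
  refine T.congr fun n => ?_
  rw [← mul_add, ← intervalIntegral.integral_add (Continuous.intervalIntegrable (by fun_prop) _ _)
    (Continuous.intervalIntegrable (by fun_prop) _ _)]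
  congr 2
  ext s
  have e2 : Real.exp (2 * α * s) = Real.exp (α * s) ^ 2 := by rw [← Real.exp_nat_mul]; ring_nf
  have e1 : Real.exp (-α * s) = (Real.exp (α * s))⁻¹ := by rw [← Real.exp_neg]; ring_nf
  rw [e2, e1]
  have := (Real.exp_pos (α * s)).ne'
  field_simp
  ring

lemma aux_prob {Ω : Type*} [MeasurableSpace Ω] (P : Measure Ω) [IsProbabilityMeasure P]
    (H : ℝ) (hH1 : 1 / 2 ≤ H) (α : ℝ) (hα : 0 < α)
    (B : ℝ → Ω → ℝ) (hm : ∀ t : ℝ, Measurable (B t)) (hc : ∀ ω, Continuous fun t => B t ω)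
    (hcov : ∀ s : ℝ, 0 < s → ∫ ω, B s ω * B s ω ∂P = s ^ (2 * H)) :
    ∀ᵐ ω ∂P, IntegrableOn (fun s => Real.exp (-α * s) * B s ω ^ 2) (Set.Ioi 0) := by
  have hj : Measurable (Function.uncurry B) := measurable_uncurry_of_continuous_of_measurable hc hm
  have hj2 : Measurable (fun p : Ω × ℝ =>
      ENNReal.ofReal (Real.exp (-α * p.2) * B p.2 p.1 ^ 2)) := by
    have : Measurable (fun p : Ω × ℝ => B p.2 p.1) := hj.comp measurable_swap
    fun_prop
  have hfin : ∫⁻ ω, (∫⁻ s in Set.Ioi (0:ℝ), ENNReal.ofReal (Real.exp (-α * s) * B s ω ^ 2)) ∂P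
      ≠ ⊤ := by
    rw [lintegral_lintegral_swap hj2.aemeasurable]
    have h1 : ∫⁻ s in Set.Ioi (0:ℝ), ∫⁻ ω, ENNReal.ofReal (Real.exp (-α * s) * B s ω ^ 2) ∂P
        = ∫⁻ s in Set.Ioi (0:ℝ), ENNReal.ofReal (s ^ (2 * H) * Real.exp (-α * s ^ (1:ℝ))) := by
      refine setLIntegral_congr_fun measurableSet_Ioi fun s hs => ?_
      have hs0 : (0:ℝ) < s := hs
      have hI : Integrable (fun ω => B s ω * B s ω) P := by
        by_contra hn
        have := hcov s hs0
        rw [integral_undef hn] at this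
        exact (Real.rpow_pos_of_pos hs0 _).ne this
      have hI2 : Integrable (fun ω => Real.exp (-α * s) * B s ω ^ 2) P := by
        simp_rw [pow_two]; exact hI.const_mul _
      rw [← ofReal_integral_eq_lintegral_ofReal hI2 (Eventually.of_forall fun ω => by positivity),
        integral_const_mul]
      simp_rw [pow_two]
      rw [hcov s hs0, Real.rpow_one, mul_comm]
    rw [h1]
    have := integrableOn_rpow_mul_exp_neg_mul_rpow (p := 1) (s := 2 * H) (b := α)
      (by linarith) one_pos hα
    exact this.lintegral_lt_top.ne
  filter_upwards [ae_lt_top hj2.lintegral_prod_right' hfin] with ω hω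
  refine ⟨Continuous.aestronglyMeasurable (by have := hc ω; fun_prop), ?_⟩
  rw [hasFiniteIntegral_iff_ofReal (Eventually.of_forall fun s => by positivity)]
  exact hω

/-- Almost surely, as the integer `n → ∞`,
`e^{-2α n} ∫_0^n X_s² ds → (A_∞ + α Z_∞)² / (2α)`. -/
theorem stmt_16 {Ω : Type*} [MeasurableSpace Ω] (P : Measure Ω) [IsProbabilityMeasure P]
    (H : ℝ) (hH1 : 1 / 2 ≤ H) (hH2 : H < 1)
    (B : ℝ → Ω → ℝ)
    (hBmeas : ∀ t : ℝ, Measurable (B t))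
    (hBgauss : ∀ (m : ℕ) (t : Fin m → ℝ) (c : Fin m → ℝ), (∀ i, 0 ≤ t i) →
      ∃ v : NNReal, Measure.map (fun ω => ∑ i, c i * B (t i) ω) P = gaussianReal 0 v)
    (hB0 : ∀ ω, B 0 ω = 0)
    (hBcov : ∀ s t : ℝ, 0 ≤ s → 0 ≤ t →
      ∫ ω, B s ω * B t ω ∂P = 1 / 2 * (s ^ (2 * H) + t ^ (2 * H) - |t - s| ^ (2 * H)))
    (hBcont : ∀ᵐ ω ∂P, ContinuousOn (fun t => B t ω) (Set.Ici (0 : ℝ)))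
    (α : ℝ) (hα : 0 < α)
    (Z : ℝ → Ω → ℝ)
    (hZ : ∀ (t : ℝ) (ω : Ω), Z t ω = ∫ s in (0:ℝ)..t, Real.exp (-α * s) * B s ω)
    (Zinf : Ω → ℝ)
    (hZinf : ∀ ω : Ω, Zinf ω = ∫ s in Set.Ioi (0:ℝ), Real.exp (-α * s) * B s ω)
    (L : ℝ → ℝ)
    (hLmeas : Measurable L) (hLbdd : ∃ M : ℝ, ∀ t : ℝ, |L t| ≤ M)
    (hLper : ∀ t : ℝ, L (t + 1) = L t)
    (A : ℝ → ℝ) (hA : ∀ t : ℝ, A t = ∫ s in (0:ℝ)..t, Real.exp (-α * s) * L s)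
    (Ainf : ℝ) (hAinf : Ainf = A 1 / (1 - Real.exp (-α)))
    (X : ℝ → Ω → ℝ)
    (hX : ∀ (t : ℝ) (ω : Ω), X t ω = Real.exp (α * t) * A t
        + α * Real.exp (α * t) * Z t ω + B t ω) :
    ∀ᵐ ω ∂P, Tendsto (fun n : ℕ => Real.exp (-2 * α * n) *
        ∫ s in (0:ℝ)..(n:ℝ), X s ω ^ 2)
      atTop (nhds ((Ainf + α * Zinf ω) ^ 2 / (2 * α))) := by
  obtain ⟨S, hSsub, hSm, hS⟩ : ∃ S : Set Ω, (∀ ω ∈ S, ContinuousOn (fun t => B t ω)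
      (Set.Ici (0 : ℝ))) ∧ MeasurableSet S ∧ ∀ᵐ ω ∂P, ω ∈ S := by
    have h0 := ae_iff.mp hBcont
    refine ⟨(toMeasurable P {ω | ¬ ContinuousOn (fun t => B t ω) (Set.Ici (0 : ℝ))})ᶜ, ?_,
      (measurableSet_toMeasurable _ _).compl, ?_⟩
    · intro ω hω
      by_contra hn
      exact hω (subset_toMeasurable P _ hn)
    · rw [ae_iff]
      simpa [measure_toMeasurable] using h0
  let B' : ℝ → Ω → ℝ := fun t => S.indicator (B (max t 0))
  have hm : ∀ t, Measurable (B' t) := fun t => (hBmeas _).indicator hSm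
  have hBB : ∀ ω ∈ S, ∀ t, 0 ≤ t → B' t ω = B t ω := by
    intro ω hω t ht
    simp only [B', Set.indicator_of_mem hω, max_eq_left ht]
  have hc : ∀ ω, Continuous fun t => B' t ω := by
    intro ω
    by_cases hω : ω ∈ S
    · simp only [B', Set.indicator_of_mem hω]
      exact (hSsub ω hω).comp_continuous (f := fun t : ℝ => max t 0) (by fun_prop)
        (fun t => Set.mem_Ici.mpr (le_max_right t 0))
    · simp only [B', Set.indicator_of_notMem hω]
      fun_prop
  have hcov : ∀ s : ℝ, 0 < s → ∫ ω, B' s ω * B' s ω ∂P = s ^ (2 * H) := by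
    intro s hs
    have h1 : ∫ ω, B' s ω * B' s ω ∂P = ∫ ω, B s ω * B s ω ∂P := by
      apply integral_congr_ae
      filter_upwards [hS] with ω hω
      rw [hBB ω hω s hs.le]
    rw [h1, hBcov s s hs.le hs.le, sub_self, abs_zero, Real.zero_rpow (by linarith)]
    ring
  filter_upwards [hS, aux_prob P H hH1 α hα B' hm hc hcov] with ω hω hint
  have hZZ : ∀ t, 0 ≤ t → ∫ s in (0:ℝ)..t, Real.exp (-α * s) * B' s ω = Z t ω := by
    intro t ht
    rw [hZ]
    apply intervalIntegral.integral_congr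
    intro s hs
    rw [Set.uIcc_of_le ht] at hs
    simp only [hBB ω hω s hs.1]
  have hZi : ∫ s in Set.Ioi (0:ℝ), Real.exp (-α * s) * B' s ω = Zinf ω := by
    rw [hZinf]
    refine setIntegral_congr_fun measurableSet_Ioi fun s hs => ?_
    simp only [hBB ω hω s (le_of_lt hs)]
  have T := aux_path α hα (fun t => B' t ω) (hc ω) hint L hLmeas hLbdd hLper A hA Ainf hAinf
    (fun t => ∫ s in (0:ℝ)..t, Real.exp (-α * s) * B' s ω) (fun t => rfl)
  rw [hZi] at T
  refine T.congr fun n => ?_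
  congr 1
  apply intervalIntegral.integral_congr
  intro s hs
  rw [Set.uIcc_of_le (Nat.cast_nonneg n)] at hs
  simp only [hX, hZZ s hs.1, hBB ω hω s hs.1]
end

section
/- For every H ∈ (1/2, 1) and α > 0, (e^{−α n}/n^H) ∫_0^n ∫_0^n e^{α v} |u − v|^{2H−2} du dv → 0 as n → ∞; in particular, one has e^{−α n} ∫_0^n e^{α v} (n − v)^{2H−1} dv = ∫_0^n e^{−α x} x^{2H−1} dx ≤ Γ(2H)/α^{2H} for all n. -/
open MeasureTheory Filter

lemma aux_int_s19 (s c : ℝ) (hs : 0 < s) (hc : 0 ≤ c) :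
    IntervalIntegrable (fun x : ℝ => |x| ^ (s - 1)) volume 0 c ∧
    ∫ x in (0:ℝ)..c, |x| ^ (s - 1) = c ^ s / s := by
  have h1 : IntervalIntegrable (fun x : ℝ => x ^ (s - 1)) volume 0 c :=
    intervalIntegral.intervalIntegrable_rpow' (by linarith)
  constructor
  · refine h1.congr ?_
    intro x hx
    rw [Set.uIoc_of_le hc] at hx
    simp only [abs_of_pos hx.1]
  · have : ∫ x in (0:ℝ)..c, |x| ^ (s - 1) = ∫ x in (0:ℝ)..c, x ^ (s - 1) := by
      apply intervalIntegral.integral_congr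
      intro x hx
      rw [Set.uIcc_of_le hc] at hx
      simp only [abs_of_nonneg hx.1]
    rw [this, integral_rpow (Or.inl (by linarith))]
    simp [Real.zero_rpow hs.ne']

lemma aux_inner (s n v : ℝ) (hs : 0 < s) (h0 : 0 ≤ v) (hn : v ≤ n) :
    ∫ u in (0:ℝ)..n, |u - v| ^ (s - 1) = v ^ s / s + (n - v) ^ s / s := by
  rw [intervalIntegral.integral_comp_sub_right (fun x : ℝ => |x| ^ (s - 1)) v]
  obtain ⟨i1, e1⟩ := aux_int_s19 s v hs h0
  obtain ⟨i2, e2⟩ := aux_int_s19 s (n - v) hs (by linarith)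
  have i3 : IntervalIntegrable (fun x : ℝ => |x| ^ (s - 1)) volume (0 - v) 0 := by
    have := (IntervalIntegrable.iff_comp_neg (f := fun x : ℝ => |x| ^ (s - 1))).1 i1
    simpa using this.symm
  rw [← intervalIntegral.integral_add_adjacent_intervals i3 i2, e2]
  congr 1
  rw [← e1]
  have := intervalIntegral.integral_comp_neg (a := 0) (b := v) (fun x : ℝ => |x| ^ (s - 1))
  simpa using this.symm

lemma aux_bound (s a n : ℝ) (hs : 0 < s) (ha : 0 < a) (hn : 0 ≤ n) :
    |∫ v in (0:ℝ)..n, ∫ u in (0:ℝ)..n, Real.exp (a * v) * |u - v| ^ (s - 1)| ≤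
      2 * n ^ s / (s * a) * Real.exp (a * n) := by
  have hg : ∫ v in (0:ℝ)..n, Real.exp (a * v) * (2 * n ^ s / s) =
      (Real.exp (a * n) - 1) / a * (2 * n ^ s / s) := by
    rw [intervalIntegral.integral_mul_const,
      intervalIntegral.integral_comp_mul_left (fun x => Real.exp x) ha.ne', integral_exp]
    simp only [mul_zero, Real.exp_zero, smul_eq_mul]
    ring
  calc _ ≤ ∫ v in (0:ℝ)..n, Real.exp (a * v) * (2 * n ^ s / s) := by
        rw [← Real.norm_eq_abs]
        apply intervalIntegral.norm_integral_le_of_norm_le hn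
        · refine Eventually.of_forall fun v hv => ?_
          rw [intervalIntegral.integral_const_mul, aux_inner s n v hs hv.1.le hv.2]
          have h1 : v ^ s ≤ n ^ s := Real.rpow_le_rpow hv.1.le hv.2 hs.le
          have h2 : (n - v) ^ s ≤ n ^ s :=
            Real.rpow_le_rpow (by linarith [hv.2]) (by linarith [hv.1]) hs.le
          have h3 := Real.rpow_nonneg hv.1.le s
          have h4 : 0 ≤ (n - v) ^ s := Real.rpow_nonneg (by linarith [hv.2]) s
          rw [Real.norm_of_nonneg (by positivity), ← add_div]
          gcongr
          linarith
        · exact Continuous.intervalIntegrable (by fun_prop) _ _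
    _ = (Real.exp (a * n) - 1) / a * (2 * n ^ s / s) := hg
    _ ≤ Real.exp (a * n) / a * (2 * n ^ s / s) := by
        gcongr
        linarith
    _ = _ := by field_simp

/-- For `H ∈ (1/2, 1)` and `α > 0`,
`(e^{-α n} / n^H) ∫_0^n ∫_0^n e^{α v} |u - v|^{2H-2} du dv → 0` as `n → ∞`;
moreover `e^{-α n} ∫_0^n e^{α v} (n - v)^{2H-1} dv = ∫_0^n e^{-α x} x^{2H-1} dx
≤ Γ(2H) / α^{2H}` for all `n`. -/
theorem stmt_19 (H α : ℝ) (hH1 : 1 / 2 < H) (hH2 : H < 1) (hα : 0 < α) :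
    Tendsto (fun n : ℕ => Real.exp (-α * n) / (n : ℝ) ^ H *
        ∫ v in (0:ℝ)..(n:ℝ), ∫ u in (0:ℝ)..(n:ℝ),
          Real.exp (α * v) * |u - v| ^ (2 * H - 2))
      atTop (nhds 0) ∧
    ∀ n : ℕ,
      (Real.exp (-α * n) *
          ∫ v in (0:ℝ)..(n:ℝ), Real.exp (α * v) * ((n : ℝ) - v) ^ (2 * H - 1)
        = ∫ x in (0:ℝ)..(n:ℝ), Real.exp (-α * x) * x ^ (2 * H - 1)) ∧
      (∫ x in (0:ℝ)..(n:ℝ), Real.exp (-α * x) * x ^ (2 * H - 1))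
        ≤ Real.Gamma (2 * H) / α ^ (2 * H) := by
  constructor
  · have hs : 0 < 2 * H - 1 := by linarith
    have key : Tendsto (fun n : ℕ => 2 / ((2 * H - 1) * α) * (n : ℝ) ^ (-(1 - H))) atTop
        (nhds 0) := by
      have := ((tendsto_rpow_neg_atTop (y := 1 - H) (by linarith)).comp
        tendsto_natCast_atTop_atTop).const_mul (2 / ((2 * H - 1) * α))
      simpa using this
    refine squeeze_zero_norm' ?_ key
    filter_upwards [eventually_gt_atTop 0] with n hn
    have hn' : (0:ℝ) < n := by exact_mod_cast hn
    have hb := aux_bound (2 * H - 1) α n hs hα hn'.le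
    rw [show 2 * H - 1 - 1 = 2 * H - 2 by ring] at hb
    rw [norm_mul, Real.norm_eq_abs (∫ _ in _.._, _), Real.norm_of_nonneg (by positivity)]
    refine (mul_le_mul_of_nonneg_left hb (by positivity)).trans (le_of_eq ?_)
    have e1 : Real.exp (-α * n) * Real.exp (α * n) = 1 := by
      rw [← Real.exp_add]; simp
    have e2 : (n:ℝ) ^ (-(1 - H)) = (n:ℝ) ^ (2 * H - 1) / (n:ℝ) ^ H := by
      rw [← Real.rpow_sub hn']; congr 1; ring
    rw [e2]
    calc _ = (Real.exp (-α * n) * Real.exp (α * n)) *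
          (2 / ((2 * H - 1) * α) * ((n:ℝ) ^ (2 * H - 1) / (n:ℝ) ^ H)) := by ring
      _ = _ := by rw [e1, one_mul]
  · intro n
    constructor
    · rw [← intervalIntegral.integral_const_mul]
      have := intervalIntegral.integral_comp_sub_left (a := 0) (b := (n:ℝ))
        (fun x : ℝ => Real.exp (-α * x) * x ^ (2 * H - 1)) (n:ℝ)
      simp only [sub_self, sub_zero] at this
      rw [← this]
      congr 1
      ext v
      rw [← mul_assoc, ← Real.exp_add]
      congr 2
      ring
    · have h := Real.integral_rpow_mul_exp_neg_mul_Ioi (a := 2 * H) (r := α) (by linarith) hα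
      have hi := integrableOn_rpow_mul_exp_neg_mul_rpow (p := 1) (s := 2 * H - 1) (b := α)
        (by linarith) one_pos hα
      simp only [Real.rpow_one] at hi
      rw [intervalIntegral.integral_of_le (Nat.cast_nonneg n)]
      have e : Real.Gamma (2 * H) / α ^ (2 * H) =
          ∫ t in Set.Ioi (0:ℝ), t ^ (2 * H - 1) * Real.exp (-α * t) := by
        simp only [neg_mul]
        rw [h, Real.div_rpow zero_le_one hα.le, Real.one_rpow]
        ring
      rw [e]
      simp_rw [mul_comm (Real.exp _)]
      refine setIntegral_mono_set hi ?_ (Eventually.of_forall fun x hx => hx.1)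
      filter_upwards [ae_restrict_mem measurableSet_Ioi] with x hx
      have : (0:ℝ) < x := hx
      simp only [Pi.zero_apply]
      positivity
end
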